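/- For every natural number N and every compact set K contained in the open unit disc 𝔻 ⊂ ℝ², there exists a constant C₂ = C₂(K, N) > 0 with the following property: whenever u and v are harmonic functions on 𝔻, neither identically zero, such that Z(u) = Z(v) and the number of connected components of 𝔻 ∖ Z(u) is less than N, then sup_{x ∈ K ∖ Z(u)} |∇(u/v)(x)| ≤ C₂ · inf_{x ∈ K ∖ Z(u)} |u(x)/v(x)|, where ∇(u/v) denotes the gradient of the ratio u/v on 𝔻 ∖ Z(v). -/

import Mathlib

open Metric Set Filter

noncomputable section

abbrev En (n : ℕ) : Type := EuclideanSpace ℝ (Fin n)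

/-- The Laplacian of `u` at `x`, computed from the second iterated Fréchet derivative. -/
def laplacianAt {n : ℕ} (u : En n → ℝ) (x : En n) : ℝ :=
  ∑ i : Fin n, iteratedFDeriv ℝ 2 u x ![EuclideanSpace.single i 1, EuclideanSpace.single i 1]

/-- `u` is harmonic on `Ω`: twice continuously differentiable with vanishing Laplacian. -/
def HarmonicOnSet {n : ℕ} (u : En n → ℝ) (Ω : Set (En n)) : Prop :=
  ContDiffOn ℝ 2 u Ω ∧ ∀ x ∈ Ω, laplacianAt u x = 0

/-- The zero set of `u` within `Ω`. -/
def zeroSet {n : ℕ} (u : En n → ℝ) (Ω : Set (En n)) : Set (En n) :=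
  {x ∈ Ω | u x = 0}

/-- The collection of nodal domains of `u` in `Ω`, i.e. the connected components of
`Ω \ Z(u)`. -/
def nodalComponents {n : ℕ} (u : En n → ℝ) (Ω : Set (En n)) : Set (Set (En n)) :=
  {C | ∃ x ∈ Ω \ zeroSet u Ω, C = connectedComponentIn (Ω \ zeroSet u Ω) x}

open scoped Topology ComplexConjugate

/-- The exterior of the open unit disc is connected. -/
theorem isPreconnected_one_le_norm : IsPreconnected {z : ℂ | 1 ≤ ‖z‖} := by
  have hs : IsPreconnected (sphere (0 : ℂ) 1) :=
    isPreconnected_sphere (by rw [Complex.rank_real_complex]; norm_num) 0 1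
  have h := (hs.prod (isPreconnected_Ici (a := (1 : ℝ)))).image
    (fun p : ℂ × ℝ => (p.2 : ℂ) * p.1) (by fun_prop)
  refine (congrArg IsPreconnected ?_).mp h
  ext z
  simp only [mem_image, mem_prod, mem_sphere_iff_norm, sub_zero, mem_Ici, mem_ofPred_eq, Prod.exists]
  constructor
  · rintro ⟨a, t, ⟨ha, ht⟩, rfl⟩
    rw [norm_mul, ha, Complex.norm_real, mul_one]
    exact ht.trans (le_abs_self t)
  · intro hz
    have hz0 : (‖z‖ : ℂ) ≠ 0 := by
      exact_mod_cast (by linarith : ‖z‖ ≠ 0)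
    refine ⟨z / ‖z‖, ‖z‖, ⟨?_, hz⟩, by field_simp⟩
    rw [norm_div, Complex.norm_real, norm_norm, div_self (by linarith)]

/-- If `a` and `b` lie in the same component of the complement of the closed set `E`,
then `(z - a) / (z - b)` has a continuous square root on `E`. -/
theorem exists_continuousOn_sq_eq_div {E : Set ℂ} (hE : IsClosed E) {G : Set ℂ}
    (hG : IsPreconnected G) (hGE : G ⊆ Eᶜ) {a b : ℂ} (ha : a ∈ G) (hb : b ∈ G) :
    ∃ s : ℂ → ℂ, ContinuousOn s E ∧ ∀ z ∈ E, s z ^ 2 = (z - a) / (z - b) := by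
  have hne : ∀ x ∈ G, ∀ z ∈ E, z - x ≠ 0 := fun x hx z hz h => by
    rw [sub_eq_zero] at h
    exact hGE hx (h ▸ hz)
  refine hG.induction₂' (fun a b => ∃ s : ℂ → ℂ, ContinuousOn s E ∧
    ∀ z ∈ E, s z ^ 2 = (z - a) / (z - b)) ?_ ?_ ha hb
  · intro x hx
    obtain ⟨ε, hε, hball⟩ := Metric.isOpen_iff.mp hE.isOpen_compl x (hGE hx)
    have key : ∀ y, dist y x < ε / 2 → ∀ z ∈ E, (z - x) / (z - y) ∈ Complex.slitPlane ∧
        (z - y) / (z - x) ∈ Complex.slitPlane ∧ z - y ≠ 0 := by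
      intro y hy z hz
      have hzx : ε ≤ ‖z - x‖ := by
        by_contra hlt
        exact hball (by rw [mem_ball, dist_eq_norm]; linarith) hz
      rw [dist_eq_norm] at hy
      have hzy : ε / 2 < ‖z - y‖ := by
        have := norm_sub_le_norm_sub_add_norm_sub z y x
        linarith
      have h1 : z - y ≠ 0 := norm_pos_iff.mp (by linarith)
      have h2 : z - x ≠ 0 := norm_pos_iff.mp (by linarith)
      refine ⟨?_, ?_, h1⟩
      · have : (z - x) / (z - y) = 1 + (y - x) / (z - y) := by field_simp; ring
        rw [this]
        apply Complex.mem_slitPlane_of_norm_lt_one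
        rw [norm_div, div_lt_one (by linarith)]
        linarith
      · have : (z - y) / (z - x) = 1 + (x - y) / (z - x) := by field_simp; ring
        rw [this]
        apply Complex.mem_slitPlane_of_norm_lt_one
        rw [norm_div, div_lt_one (by linarith), norm_sub_rev]
        linarith
    have hsq : ∀ w : ℂ, (w ^ (1 / 2 : ℂ)) ^ 2 = w := fun w => by
      rw [← Complex.cpow_mul_nat]; simp
    filter_upwards [mem_nhdsWithin_of_mem_nhds (ball_mem_nhds x (half_pos hε))] with y hy
    have hk := key y hy
    refine ⟨⟨fun z => ((z - x) / (z - y)) ^ (1 / 2 : ℂ), ?_, fun z _ => hsq _⟩,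
      ⟨fun z => ((z - y) / (z - x)) ^ (1 / 2 : ℂ), ?_, fun z _ => hsq _⟩⟩
    · refine ContinuousOn.cpow_const ?_ fun z hz => (hk z hz).1
      exact ContinuousOn.div (by fun_prop) (by fun_prop) fun z hz => (hk z hz).2.2
    · refine ContinuousOn.cpow_const ?_ fun z hz => (hk z hz).2.1
      exact ContinuousOn.div (by fun_prop) (by fun_prop) fun z hz => hne x hx z hz
  · rintro x y w hx hy hw ⟨s, hs, hs'⟩ ⟨t, ht, ht'⟩
    refine ⟨fun z => s z * t z, hs.mul ht, fun z hz => ?_⟩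
    rw [mul_pow, hs' z hz, ht' z hz]
    have := hne y hy z hz
    field_simp

/-- If a closed set contains a horizontal segment and, away from a disc around the origin, a
connected set joining its two ends, then `(w - a) / (w - b)` has no continuous square root on it
when `a` and `b` are points of the disc above and below the segment. -/
theorem not_exists_sq_eq_div_of_crossing {E₂ : Set ℂ} (hE₂ : IsPreconnected E₂)
    (h1 : (1 : ℂ) ∈ E₂) (h2 : (-1 : ℂ) ∈ E₂) {r : ℝ} (hr : r ≤ 1) (hdisj : ∀ z ∈ E₂, r ≤ ‖z‖)
    {a b : ℂ} (ha : ‖a‖ < r) (hb : ‖b‖ < r) (ha' : 0 < a.im) (hb' : b.im < 0)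
    {s : ℂ → ℂ} (hs : ContinuousOn s (E₂ ∪ Complex.ofReal '' Icc (-1) 1))
    (hs' : ∀ z ∈ E₂ ∪ Complex.ofReal '' Icc (-1) 1, s z ^ 2 = (z - a) / (z - b)) : False := by
  set E := E₂ ∪ Complex.ofReal '' Icc (-1) 1 with hE
  -- the crossing point of the segment `[a, b]` with the real axis
  set c : ℝ := (a.im * b.re - b.im * a.re) / (a.im - b.im) with hc
  have hd : 0 < a.im - b.im := by linarith
  have hseg : ∀ t ∈ Icc (0 : ℝ) 1, ‖(1 - t : ℂ) * a + t * b‖ < r := by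
    intro t ht
    have := (convex_ball (0 : ℂ) r) (mem_ball_zero_iff.mpr ha) (mem_ball_zero_iff.mpr hb)
      (sub_nonneg.mpr ht.2) ht.1 (by ring)
    rw [mem_ball_zero_iff] at this
    simpa using this
  have hcr : |c| < r := by
    obtain ⟨τ, hτ⟩ : ∃ τ : ℝ, τ = a.im / (a.im - b.im) := ⟨_, rfl⟩
    have h := hseg τ ⟨by rw [hτ]; positivity, by rw [hτ, div_le_one hd]; linarith⟩
    have h3 : τ * (a.im - b.im) = a.im := by rw [hτ]; field_simp
    have h4 : c * (a.im - b.im) = a.im * b.re - b.im * a.re := by rw [hc]; field_simp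
    have e : (1 - (τ : ℂ)) * a + (τ : ℂ) * b = (c : ℂ) := by
      apply Complex.ext
      · simp only [Complex.add_re, Complex.mul_re, Complex.sub_re, Complex.one_re,
          Complex.ofReal_re, Complex.sub_im, Complex.one_im, Complex.ofReal_im]
        refine mul_left_cancel₀ hd.ne' ?_
        linear_combination (b.re - a.re) * h3 - h4
      · simp only [Complex.add_im, Complex.mul_im, Complex.sub_re, Complex.one_re,
          Complex.ofReal_re, Complex.sub_im, Complex.one_im, Complex.ofReal_im]
        linear_combination -h3
    rw [e, Complex.norm_real] at h
    exact h
  have hzb : ∀ z ∈ E, z ≠ b := by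
    rintro z (hz | ⟨x, hx, rfl⟩) h
    · have := hdisj z hz; rw [h] at this; linarith
    · have := congrArg Complex.im h
      simp at this; linarith
  have him : ∀ x : ℝ, (((x : ℂ) - a) / (x - b)).im = (a.im - b.im) * (c - x) / Complex.normSq (x - b) := by
    intro x
    rw [Complex.div_im]
    have : (a.im - b.im) * c = a.im * b.re - b.im * a.re := by rw [hc]; field_simp
    have h3 : (a.im - b.im) * (c - x) = a.im * b.re - b.im * a.re - (a.im - b.im) * x := by
      rw [← this]; ring
    rw [h3]
    simp
    ring
  have hn : ∀ x : ℝ, 0 < Complex.normSq (x - b) := by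
    intro x
    rw [Complex.normSq_pos]
    intro h
    have := congrArg Complex.im h
    simp at this; linarith
  -- off the crossing point the real part of the root does not vanish
  have hre : ∀ z ∈ E, z ≠ c → (s z).re ≠ 0 := by
    intro z hz hzc h0
    have hsq := hs' z hz
    have hneg : s z ^ 2 = ((-(s z).im ^ 2 : ℝ) : ℂ) := by
      apply Complex.ext
      · simp [pow_two, h0]
      · simp [pow_two, h0]
    rw [hneg] at hsq
    set q : ℝ := (s z).im ^ 2
    have hq : 0 ≤ q := sq_nonneg _
    have hzb' : z - b ≠ 0 := sub_ne_zero.mpr (hzb z hz)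
    rw [eq_div_iff hzb'] at hsq
    have hq1 : ((1 + q : ℝ) : ℂ) ≠ 0 := by exact_mod_cast (by linarith : (1 + q) ≠ 0)
    have hz' : z = (1 - (q / (1 + q) : ℝ) : ℂ) * a + (q / (1 + q) : ℝ) * b := by
      push_cast at hq1 hsq ⊢
      field_simp
      linear_combination -hsq
    rcases hz with hz | ⟨x, hx, rfl⟩
    · have := hseg (q / (1 + q)) ⟨by positivity, by rw [div_le_one (by linarith)]; linarith⟩
      rw [← hz'] at this
      linarith [hdisj z hz]
    · have h4 := congrArg Complex.im hsq
      rw [← mul_div_cancel_right₀ ((x : ℂ) - a) hzb', mul_div_right_comm, mul_left_inj' hzb'] at hsq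
      have h5 := congrArg Complex.im hsq
      rw [him, Complex.ofReal_im, eq_comm, div_eq_zero_iff] at h5
      have := (hn x).ne'
      have hcx : c - x ≠ 0 := fun h => hzc (by rw [sub_eq_zero.mp h])
      rcases h5 with h5 | h5
      · exact (mul_ne_zero hd.ne' hcx) h5
      · exact this h5
  have hc1 : -1 < c ∧ c < 1 := by
    have := abs_lt.mp hcr
    constructor <;> linarith
  have hl : Complex.ofReal '' Ico (-1) c ⊆ E \ {(c : ℂ)} := by
    rintro _ ⟨x, hx, rfl⟩
    refine ⟨Or.inr ⟨x, ⟨hx.1, by linarith [hx.2]⟩, rfl⟩, ?_⟩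
    simpa using hx.2.ne
  have hr' : Complex.ofReal '' Ioc c 1 ⊆ E \ {(c : ℂ)} := by
    rintro _ ⟨x, hx, rfl⟩
    refine ⟨Or.inr ⟨x, ⟨by linarith [hx.1], hx.2⟩, rfl⟩, ?_⟩
    simpa using hx.1.ne'
  have hconn : IsPreconnected (E₂ ∪ Complex.ofReal '' Ico (-1) c ∪ Complex.ofReal '' Ioc c 1) := by
    refine IsPreconnected.union 1 (Or.inl h1) ⟨1, ⟨hc1.2, le_rfl⟩, by simp⟩ ?_
      (isPreconnected_Ioc.image _ Complex.continuous_ofReal.continuousOn)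
    exact IsPreconnected.union (-1) h2 ⟨-1, ⟨le_rfl, hc1.1⟩, by simp⟩ hE₂
      (isPreconnected_Ico.image _ Complex.continuous_ofReal.continuousOn)
  have hsub : E₂ ∪ Complex.ofReal '' Ico (-1) c ∪ Complex.ofReal '' Ioc c 1 ⊆ E \ {(c : ℂ)} := by
    refine union_subset (union_subset (fun z hz => ⟨Or.inl hz, ?_⟩) hl) hr'
    rintro (rfl : z = c)
    have := hdisj _ hz
    rw [Complex.norm_real, Real.norm_eq_abs] at this
    linarith
  have hcE : (c : ℂ) ∈ E := Or.inr ⟨c, ⟨hc1.1.le, hc1.2.le⟩, rfl⟩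
  -- the sign of the real part is constant; rotate so that it is positive
  obtain ⟨σ, hσ, hpos⟩ : ∃ σ : ℝ, σ ^ 2 = 1 ∧
      ∀ z ∈ E₂ ∪ Complex.ofReal '' Ico (-1) c ∪ Complex.ofReal '' Ioc c 1, 0 < σ * (s z).re := by
    have hcont : ContinuousOn (fun z => (s z).re)
        (E₂ ∪ Complex.ofReal '' Ico (-1) c ∪ Complex.ofReal '' Ioc c 1) :=
      Complex.continuous_re.comp_continuousOn (hs.mono (hsub.trans sdiff_subset))
    have himg := hconn.image _ hcont
    have h0 : (0 : ℝ) ∉ (fun z => (s z).re) ''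
        (E₂ ∪ Complex.ofReal '' Ico (-1) c ∪ Complex.ofReal '' Ioc c 1) := by
      rintro ⟨z, hz, h⟩
      exact hre z (hsub hz).1 (hsub hz).2 h
    have hoc := himg.ordConnected
    by_cases h : 0 < (s 1).re
    · refine ⟨1, by norm_num, fun z hz => ?_⟩
      by_contra hneg
      exact h0 (hoc.out ⟨z, hz, rfl⟩ ⟨1, Or.inl (Or.inl h1), rfl⟩ ⟨by simpa using hneg, h.le⟩)
    · refine ⟨-1, by norm_num, fun z hz => ?_⟩
      by_contra hneg
      exact h0 (hoc.out ⟨1, Or.inl (Or.inl h1), rfl⟩ ⟨z, hz, rfl⟩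
        ⟨not_lt.mp h, by simp at hneg; simpa using hneg⟩)
  have him2 : ∀ x : ℝ, (x : ℂ) ∈ E → 2 * (s x).re * (s x).im
      = (a.im - b.im) * (c - x) / Complex.normSq (x - b) := by
    intro x hx
    rw [← him, ← hs' x hx, pow_two, Complex.mul_im]; ring
  have hσ0 : σ ≠ 0 := by rintro rfl; norm_num at hσ
  have hcw : ContinuousOn (fun x : ℝ => σ * (s x).im) (Icc (-1) 1) := by
    refine continuousOn_const.mul (Complex.continuous_im.comp_continuousOn
      (hs.comp Complex.continuous_ofReal.continuousOn fun x hx => Or.inr ⟨x, hx, rfl⟩))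
  have hat : ContinuousAt (fun x : ℝ => σ * (s x).im) c :=
    hcw.continuousAt (Icc_mem_nhds hc1.1 hc1.2)
  have hge : 0 ≤ σ * (s c).im := by
    have : Tendsto (fun x : ℝ => σ * (s x).im) (𝓝[<] c) (𝓝 (σ * (s c).im)) :=
      hat.mono_left nhdsWithin_le_nhds
    refine ge_of_tendsto this ?_
    filter_upwards [Ico_mem_nhdsLT hc1.1] with x hx
    have hxE := hsub (Or.inl (Or.inr ⟨x, hx, rfl⟩))
    have e := him2 x hxE.1
    have hp := hpos x (Or.inl (Or.inr ⟨x, hx, rfl⟩))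
    have : 0 < 2 * (s x).re * (s x).im := by
      rw [e]; exact div_pos (mul_pos hd (by linarith [hx.2])) (hn x)
    have h6 : 0 < (σ * (s x).re) * (σ * (s x).im) := by nlinarith
    exact (pos_of_mul_pos_right h6 hp.le).le
  have hle : σ * (s c).im ≤ 0 := by
    have : Tendsto (fun x : ℝ => σ * (s x).im) (𝓝[>] c) (𝓝 (σ * (s c).im)) :=
      hat.mono_left nhdsWithin_le_nhds
    refine le_of_tendsto this ?_
    filter_upwards [Ioc_mem_nhdsGT hc1.2] with x hx
    have hxE := hsub (Or.inr ⟨x, hx, rfl⟩)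
    have e := him2 x hxE.1
    have hp := hpos x (Or.inr ⟨x, hx, rfl⟩)
    have : 2 * (s x).re * (s x).im < 0 := by
      rw [e]; exact div_neg_of_neg_of_pos (mul_neg_of_pos_of_neg hd (by linarith [hx.1])) (hn x)
    have h6 : (σ * (s x).re) * (σ * (s x).im) < 0 := by nlinarith
    exact (neg_of_mul_neg_right h6 hp.le).le
  have hzero : (s c).im = 0 := by
    have := le_antisymm hle hge
    exact (mul_eq_zero.mp this).resolve_left hσ0
  have hsq := hs' c hcE
  have hneg : (((c : ℂ) - a) / (c - b)).re < 0 := by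
    have e1 : (a.im - b.im) * c = a.im * b.re - b.im * a.re := by rw [hc]; field_simp
    rw [Complex.div_re, ← add_div]
    refine div_neg_of_neg_of_pos ?_ (hn c)
    simp
    have h7 : (a.im - b.im) * (c - a.re) = a.im * (b.re - a.re) := by linarith
    have h8 : (a.im - b.im) * (c - b.re) = b.im * (b.re - a.re) := by linarith
    have h9 : (a.im - b.im) ^ 2 * ((c - a.re) * (c - b.re)) = a.im * b.im * (b.re - a.re) ^ 2 := by
      linear_combination (a.im - b.im) * (c - b.re) * h7 + a.im * (b.re - a.re) * h8
    have h10 : a.im * b.im < 0 := mul_neg_of_pos_of_neg ha' hb'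
    have h11 : (c - a.re) * (c - b.re) ≤ 0 := by
      by_contra hcon
      push Not at hcon
      have : 0 < (a.im - b.im) ^ 2 * ((c - a.re) * (c - b.re)) := by positivity
      nlinarith [sq_nonneg (b.re - a.re)]
    linarith
  rw [← hsq, pow_two, Complex.mul_re, hzero] at hneg
  nlinarith [mul_self_nonneg (s c).re]

/-- If the holomorphic function `F` takes the single value `0` on the part of the compact set `E`
where `re F = 0`, then a point of `{re F = 0}` off `E` is not enclosed by `E`. -/
theorem exists_mem_connectedComponentIn_one_le_norm {F : ℂ → ℂ}
    (hF : AnalyticOnNhd ℂ F (ball 0 1))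
    (hnc : ∀ z ∈ ball (0 : ℂ) 1, ¬ ∀ᶠ w in 𝓝 z, F w = F z)
    {E : Set ℂ} (hE : IsCompact E) (hEb : E ⊆ ball 0 1)
    (hEz : ∀ z ∈ E, (F z).re = 0 → F z = 0) {a : ℂ} (haE : a ∉ E)
    (hFa : (F a).re = 0) : ∃ w ∈ connectedComponentIn Eᶜ a, 1 ≤ ‖w‖ := by
  by_contra! hcon
  set G := connectedComponentIn Eᶜ a with hG
  have haG : a ∈ G := mem_connectedComponentIn haE
  have hGo : IsOpen G := hE.isClosed.isOpen_compl.connectedComponentIn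
  have hGb : G ⊆ ball 0 1 := fun z hz => mem_ball_zero_iff.mpr (hcon z hz)
  have hcl : closure G ⊆ G ∪ E := by
    intro z hz
    by_cases hzE : z ∈ E
    · exact Or.inr hzE
    left
    have hzo : IsOpen (connectedComponentIn Eᶜ z) := hE.isClosed.isOpen_compl.connectedComponentIn
    obtain ⟨w, hw1, hw2⟩ := mem_closure_iff.mp hz _ hzo (mem_connectedComponentIn hzE)
    have e1 := connectedComponentIn_eq hw1
    have e2 := connectedComponentIn_eq hw2
    rw [hG, e2, ← e1]
    exact mem_connectedComponentIn hzE
  have hclb : closure G ⊆ ball 0 1 := hcl.trans (union_subset hGb hEb)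
  have hcpt : IsCompact (closure G) :=
    Metric.isCompact_of_isClosed_isBounded isClosed_closure (isBounded_ball.subset hclb)
  have hFc : ContinuousOn F (closure G) := hF.continuousOn.mono hclb
  have hT : IsCompact (closure G ∩ {z | (F z).re = 0}) := by
    refine hcpt.of_isClosed_subset ?_ inter_subset_left
    exact (Complex.continuous_re.comp_continuousOn hFc).preimage_isClosed_of_isClosed
      isClosed_closure (isClosed_singleton (x := (0 : ℝ)))
  have haT : a ∈ closure G ∩ {z | (F z).re = 0} := ⟨subset_closure haG, hFa⟩
  -- an extremal point of `± im F` on `T` cannot lie in `G`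
  have key : ∀ σ : ℝ, σ ≠ 0 → ∀ p ∈ closure G ∩ {z | (F z).re = 0},
      (∀ q ∈ closure G ∩ {z | (F z).re = 0}, σ * (F q).im ≤ σ * (F p).im) → p ∉ G := by
    intro σ hσ p hp hmax hpG
    have hmap := ((hF p (hGb hpG)).eventually_constant_or_nhds_le_map_nhds).resolve_left
      (hnc p (hGb hpG))
    have himg : F '' G ∈ 𝓝 (F p) := hmap (image_mem_map (hGo.mem_nhds hpG))
    obtain ⟨ε, hε, hsub⟩ := Metric.mem_nhds_iff.mp himg
    obtain ⟨τ, hτ, hτ1⟩ : ∃ τ : ℝ, 0 < τ ∧ τ * |σ| < ε :=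
      ⟨ε / (2 * |σ|), by positivity, by
        have : 0 < |σ| := abs_pos.mpr hσ
        field_simp; linarith⟩
    obtain ⟨q, hqG, hq⟩ := hsub (show F p + (τ * σ : ℝ) * Complex.I ∈ ball (F p) ε by
      rw [mem_ball, dist_eq_norm, add_sub_cancel_left, norm_mul, Complex.norm_I, mul_one,
        Complex.norm_real, norm_mul, Real.norm_eq_abs, Real.norm_eq_abs, abs_of_pos hτ]
      exact hτ1)
    have hpre : (F p).re = 0 := hp.2
    have hqre : (F q).re = 0 := by rw [hq]; simp [hpre]
    have hqim : (F q).im = (F p).im + τ * σ := by rw [hq]; simp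
    have h := hmax q ⟨subset_closure hqG, hqre⟩
    rw [hqim] at h
    have : 0 < τ * (σ * σ) := mul_pos hτ (mul_self_pos.mpr hσ)
    nlinarith
  have hext : ∀ σ : ℝ, σ ≠ 0 → σ * (F a).im ≤ 0 := by
    intro σ hσ
    obtain ⟨p, hp, hmax⟩ := hT.exists_isMaxOn ⟨a, haT⟩
      (f := fun z => σ * (F z).im)
      (continuousOn_const.mul (Complex.continuous_im.comp_continuousOn
        (hFc.mono inter_subset_left)))
    have hpG := key σ hσ p hp fun q hq => hmax hq
    have hF0 := hEz p ((hcl hp.1).resolve_left hpG) hp.2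
    have h := hmax haT
    simpa [hF0] using h
  have h1 := hext 1 one_ne_zero
  have h2 := hext (-1) (by norm_num)
  have h0 : (F a).im = 0 := by linarith
  refine key 1 one_ne_zero a haT (fun q hq => ?_) haG
  obtain ⟨p, hp, hmax⟩ := hT.exists_isMaxOn ⟨a, haT⟩
      (f := fun z => (1 : ℝ) * (F z).im)
      (continuousOn_const.mul (Complex.continuous_im.comp_continuousOn
        (hFc.mono inter_subset_left)))
  have hpG := key 1 one_ne_zero p hp fun q hq => hmax hq
  have hF0 := hEz p ((hcl hp.1).resolve_left hpG) hp.2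
  have h := hmax hq
  simpa [hF0, h0] using h

/-- `F` is injectively parametrised near its zero `z`, in the coordinate `w ↦ z + w / d`, up to a
relative error of `1 / 4` on the disc of radius `ρ`. -/
def NearlyLinearAt (F : ℂ → ℂ) (z d : ℂ) (ρ : ℝ) : Prop :=
  ∀ w : ℂ, ‖w‖ ≤ ρ → z + w / d ∈ ball (0 : ℂ) 1 ∧ ‖F (z + w / d) - w‖ ≤ ‖w‖ / 4

theorem exists_nearlyLinearAt {F : ℂ → ℂ} {z : ℂ} (hz : z ∈ ball (0 : ℂ) 1)
    (hF : AnalyticAt ℂ F z) (h0 : F z = 0) (hd : deriv F z ≠ 0) :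
    ∃ ρ > 0, NearlyLinearAt F z (deriv F z) ρ := by
  have hder := hF.differentiableAt.hasDerivAt
  have h1 : HasDerivAt (fun w : ℂ => z + w / deriv F z) (1 / deriv F z) 0 :=
    ((hasDerivAt_id (0 : ℂ)).div_const _).const_add z
  have h2 : HasDerivAt (fun w : ℂ => F (z + w / deriv F z)) 1 0 := by
    have := HasDerivAt.comp (0 : ℂ) (h₂ := F) (h := fun w : ℂ => z + w / deriv F z)
      (by rw [zero_div, add_zero]; exact hder) h1
    rwa [mul_one_div_cancel hd] at this
  have h3 := (hasDerivAt_iff_isLittleO.mp h2).def (show (0 : ℝ) < 1 / 4 by norm_num)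
  have h4 : ∀ᶠ w : ℂ in 𝓝 0, z + w / deriv F z ∈ ball (0 : ℂ) 1 :=
    h1.continuousAt.eventually (by
      simp only [zero_div, add_zero]; exact isOpen_ball.mem_nhds hz)
  obtain ⟨ρ, hρ, hball⟩ := Metric.eventually_nhds_iff.mp (h3.and h4)
  refine ⟨ρ / 2, by positivity, fun w hw => ?_⟩
  have := hball (y := w) (by rw [dist_zero_right]; linarith)
  refine ⟨this.2, ?_⟩
  have h5 := this.1
  simp only [zero_div, add_zero, h0, sub_zero, smul_eq_mul, mul_one] at h5
  linarith

namespace NearlyLinearAt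

variable {F : ℂ → ℂ} {z d : ℂ} {ρ : ℝ}

theorem eq_zero (h : NearlyLinearAt F z d ρ) (hρ : 0 < ρ) : F z = 0 := by
  have := (h 0 (by simpa using hρ.le)).2
  simpa using this

theorem re_pos (h : NearlyLinearAt F z d ρ) {x y : ℝ} (hx : 0 < x) (hy : |y| ≤ x)
    (hxρ : 2 * x ≤ ρ) : 0 < (F (z + (x + y * Complex.I) / d)).re := by
  have hn : ‖(x + y * Complex.I : ℂ)‖ ≤ 2 * x := by
    refine (norm_add_le _ _).trans ?_
    rw [norm_mul, Complex.norm_I, Complex.norm_real, Complex.norm_real, Real.norm_eq_abs,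
      Real.norm_eq_abs, abs_of_pos hx]
    linarith
  have h1 := (h _ (hn.trans hxρ)).2
  have h2 := (abs_le.mp (Complex.abs_re_le_norm (F (z + (x + y * Complex.I) / d)
    - (x + y * Complex.I)))).1
  simp at h2
  linarith

theorem re_neg (h : NearlyLinearAt F z d ρ) {x y : ℝ} (hx : x < 0) (hy : |y| ≤ -x)
    (hxρ : -(2 * x) ≤ ρ) : (F (z + (x + y * Complex.I) / d)).re < 0 := by
  have hn : ‖(x + y * Complex.I : ℂ)‖ ≤ -(2 * x) := by
    refine (norm_add_le _ _).trans ?_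
    rw [norm_mul, Complex.norm_I, Complex.norm_real, Complex.norm_real, Real.norm_eq_abs,
      Real.norm_eq_abs, abs_of_neg hx]
    linarith
  have h1 := (h _ (hn.trans hxρ)).2
  have h2 := (abs_le.mp (Complex.abs_re_le_norm (F (z + (x + y * Complex.I) / d)
    - (x + y * Complex.I)))).2
  simp at h2
  linarith

theorem connectedComponentIn_eq (h : NearlyLinearAt F z d ρ) (σ : ℝ) (hσ : |σ| = 1) {x : ℝ}
    (hx : 0 < x) (hxρ : 2 * x ≤ ρ) :
    z + (σ * x : ℝ) / d ∈ connectedComponentIn (ball (0 : ℂ) 1 \ {w | (F w).re = 0})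
      (z + (σ * (ρ / 2) : ℝ) / d) := by
  have hsub : (fun t : ℝ => z + (σ * t : ℝ) / d) '' Ioc 0 (ρ / 2) ⊆
      ball (0 : ℂ) 1 \ {w | (F w).re = 0} := by
    rintro _ ⟨t, ht, rfl⟩
    refine ⟨(h _ ?_).1, ?_⟩
    · rw [Complex.norm_real, norm_mul, Real.norm_eq_abs, Real.norm_eq_abs, hσ, abs_of_pos ht.1]
      linarith [ht.2, ht.1]
    · rcases (abs_eq zero_le_one).mp hσ with rfl | rfl
      · have := h.re_pos (y := 0) ht.1 (by simpa using ht.1.le) (by linarith [ht.2])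
        simpa using this.ne'
      · have := h.re_neg (x := -t) (y := 0) (by linarith [ht.1]) (by simpa using ht.1.le)
          (by linarith [ht.2])
        simpa using this.ne
  have hpre : IsPreconnected ((fun t : ℝ => z + (σ * t : ℝ) / d) '' Ioc 0 (ρ / 2)) :=
    isPreconnected_Ioc.image _ (by fun_prop)
  exact hpre.subset_connectedComponentIn ⟨ρ / 2, ⟨by linarith, le_rfl⟩, rfl⟩ hsub
    ⟨x, ⟨hx, by linarith⟩, rfl⟩

/-- On either side of the segment through `z` there is a point of `{re F = 0}`. -/
theorem exists_re_eq_zero (h : NearlyLinearAt F z d ρ) (hF : ContinuousOn F (ball 0 1)) {y : ℝ}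
    (hy : y ≠ 0) (hyρ : 2 * |y| ≤ ρ) :
    ∃ w : ℂ, w.im = y ∧ ‖w‖ ≤ 2 * |y| ∧ (F (z + w / d)).re = 0 := by
  have hy' := abs_pos.mpr hy
  have hn : ∀ x ∈ Icc (-|y|) |y|, ‖(x + y * Complex.I : ℂ)‖ ≤ 2 * |y| := by
    intro x hx
    refine (norm_add_le _ _).trans ?_
    rw [norm_mul, Complex.norm_I, Complex.norm_real, Complex.norm_real, Real.norm_eq_abs,
      Real.norm_eq_abs]
    linarith [abs_le.mpr hx]
  have hc : ContinuousOn (fun x : ℝ => (F (z + (x + y * Complex.I) / d)).re) (Icc (-|y|) |y|) :=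
    Complex.continuous_re.comp_continuousOn (hF.comp (by fun_prop)
      fun x hx => (h _ ((hn x hx).trans hyρ)).1)
  have h1 := h.re_neg (x := -|y|) (y := y) (by linarith) (by simp) (by linarith)
  have h2 := h.re_pos (x := |y|) (y := y) hy' le_rfl hyρ
  obtain ⟨x, hx, hx0⟩ := intermediate_value_Icc (by linarith) hc ⟨h1.le, h2.le⟩
  exact ⟨x + y * Complex.I, by simp, hn x hx, hx0⟩

end NearlyLinearAt

/-- Two distinct regular zeros of `F` cannot have the same pair of adjacent components of
`{re F ≠ 0}`. -/
theorem eq_of_connectedComponentIn_eq {F : ℂ → ℂ}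
    (hF : AnalyticOnNhd ℂ F (ball 0 1))
    (hnc : ∀ z ∈ ball (0 : ℂ) 1, ¬ ∀ᶠ w in 𝓝 z, F w = F z)
    {z₁ z₂ d₁ d₂ : ℂ} (hd₁ : d₁ ≠ 0) (hd₂ : d₂ ≠ 0) {ρ₁ ρ₂ : ℝ} (hρ₁ : 0 < ρ₁) (hρ₂ : 0 < ρ₂)
    (h₁ : NearlyLinearAt F z₁ d₁ ρ₁) (h₂ : NearlyLinearAt F z₂ d₂ ρ₂)
    (hcomp : ∀ σ : ℝ, |σ| = 1 →
      connectedComponentIn (ball (0 : ℂ) 1 \ {w | (F w).re = 0}) (z₁ + (σ * (ρ₁ / 2) : ℝ) / d₁)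
      = connectedComponentIn (ball (0 : ℂ) 1 \ {w | (F w).re = 0})
        (z₂ + (σ * (ρ₂ / 2) : ℝ) / d₂)) : z₁ = z₂ := by
  by_contra hne
  have hD : 0 < ‖z₁ - z₂‖ := norm_pos_iff.mpr (sub_ne_zero.mpr hne)
  have hd₁' := norm_pos_iff.mpr hd₁
  have hd₂' := norm_pos_iff.mpr hd₂
  set S := ball (0 : ℂ) 1 \ {w | (F w).re = 0} with hS
  have hSo : IsOpen S := by
    have : S = ball 0 1 ∩ (fun w => (F w).re) ⁻¹' {0}ᶜ := by ext; simp [hS]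
    rw [this]
    exact (Complex.continuous_re.comp_continuousOn hF.continuousOn).isOpen_inter_preimage
      isOpen_ball isOpen_compl_singleton
  obtain ⟨ε₁, hε₁, hε₁ρ⟩ : ∃ ε > 0, 2 * ε ≤ ρ₁ := ⟨ρ₁ / 2, by linarith, by linarith⟩
  obtain ⟨ε₂, hε₂, hε₂ρ, hε₂D⟩ : ∃ ε > 0, 2 * ε ≤ ρ₂ ∧ ε < ‖z₁ - z₂‖ * ‖d₂‖ :=
    ⟨min (ρ₂ / 2) (‖z₁ - z₂‖ * ‖d₂‖ / 2), by positivity,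
      by linarith [min_le_left (ρ₂ / 2) (‖z₁ - z₂‖ * ‖d₂‖ / 2)], by
        have : 0 < ‖z₁ - z₂‖ * ‖d₂‖ := by positivity
        linarith [min_le_right (ρ₂ / 2) (‖z₁ - z₂‖ * ‖d₂‖ / 2)]⟩
  -- connected compact sets joining the two segments on either side
  have hjoin : ∀ σ : ℝ, |σ| = 1 → ∃ A : Set ℂ, IsCompact A ∧ IsPreconnected A ∧ A ⊆ S ∧
      z₁ + (σ * ε₁ : ℝ) / d₁ ∈ A ∧ z₂ + (σ * ε₂ : ℝ) / d₂ ∈ A := by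
    intro σ hσ
    have m1 := h₁.connectedComponentIn_eq σ hσ hε₁ hε₁ρ
    have m2 := h₂.connectedComponentIn_eq σ hσ hε₂ hε₂ρ
    rw [← hcomp σ hσ] at m2
    have hconn : IsConnected (connectedComponentIn S (z₁ + (σ * (ρ₁ / 2) : ℝ) / d₁)) :=
      ⟨⟨_, m1⟩, isPreconnected_connectedComponentIn⟩
    have hpath := (hSo.connectedComponentIn.isConnected_iff_isPathConnected).mp hconn
    obtain ⟨γ, hγ⟩ := hpath.joinedIn _ m1 _ m2
    refine ⟨range γ, isCompact_range γ.continuous, isPreconnected_range γ.continuous, ?_,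
      ⟨0, γ.source⟩, ⟨1, γ.target⟩⟩
    rintro _ ⟨t, rfl⟩
    exact connectedComponentIn_subset _ _ (hγ t)
  obtain ⟨A, hAc, hAp, hAS, hA1, hA2⟩ := hjoin 1 (by simp)
  obtain ⟨B, hBc, hBp, hBS, hB1, hB2⟩ := hjoin (-1) (by simp)
  set I₁ : Set ℂ := (fun t : ℝ => z₁ + (ε₁ * t : ℝ) / d₁) '' Icc (-1) 1 with hI₁
  set I₂ : Set ℂ := (fun t : ℝ => z₂ + (ε₂ * t : ℝ) / d₂) '' Icc (-1) 1 with hI₂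
  have hI₁c : IsCompact I₁ := isCompact_Icc.image (by fun_prop)
  have hI₂c : IsCompact I₂ := isCompact_Icc.image (by fun_prop)
  -- the segments lie in the disc and meet `{re F = 0}` only in their centres
  have hseg : ∀ {z d : ℂ} {ρ ε : ℝ}, 0 < ε → 2 * ε ≤ ρ → NearlyLinearAt F z d ρ →
      ∀ t ∈ Icc (-1 : ℝ) 1, z + (ε * t : ℝ) / d ∈ ball (0 : ℂ) 1 ∧
        ((F (z + (ε * t : ℝ) / d)).re = 0 → F (z + (ε * t : ℝ) / d) = 0) := by
    intro z d ρ ε hε hερ h t ht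
    have hbd : |ε * t| ≤ ε := by
      rw [abs_mul, abs_of_pos hε]
      exact mul_le_of_le_one_right hε.le (abs_le.mpr ht)
    refine ⟨(h _ ?_).1, fun h0 => ?_⟩
    · rw [Complex.norm_real, Real.norm_eq_abs]; linarith
    · rcases lt_trichotomy (ε * t) 0 with hlt | heq | hgt
      · have := h.re_neg (y := 0) hlt (by simpa using hlt.le) (by
          rw [abs_of_neg hlt] at hbd; linarith)
        simp only [Complex.ofReal_zero, zero_mul, add_zero] at this
        exact absurd h0 this.ne
      · rw [heq]
        simpa using h.eq_zero (by linarith)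
      · have := h.re_pos (y := 0) hgt (by simpa using hgt.le) (by
          rw [abs_of_pos hgt] at hbd; linarith)
        simp only [Complex.ofReal_zero, zero_mul, add_zero] at this
        exact absurd h0 this.ne'
  set E₂ : Set ℂ := A ∪ I₂ ∪ B with hE₂
  have hE₂c : IsCompact E₂ := (hAc.union hI₂c).union hBc
  have hE₂p : IsPreconnected E₂ := by
    refine IsPreconnected.union (z₂ + ((-1) * ε₂ : ℝ) / d₂) (Or.inr ⟨-1, by simp, by simp⟩) hB2
      (IsPreconnected.union (z₂ + (1 * ε₂ : ℝ) / d₂) hA2 ⟨1, by simp, by simp⟩ hAp ?_) hBp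
    exact isPreconnected_Icc.image _ (by fun_prop)
  have hz₁ : z₁ ∉ E₂ := by
    rintro ((hz | ⟨t, ht, hz⟩) | hz)
    · exact (hAS hz).2 (by simp [h₁.eq_zero hρ₁])
    · have e : z₁ - z₂ = (ε₂ * t : ℝ) / d₂ := by rw [← hz]; ring
      have e2 : ‖z₁ - z₂‖ * ‖d₂‖ = |ε₂ * t| := by
        rw [e, norm_div, Complex.norm_real, Real.norm_eq_abs]; field_simp
      have hbd : |ε₂ * t| ≤ ε₂ := by
        rw [abs_mul, abs_of_pos hε₂]
        exact mul_le_of_le_one_right hε₂.le (abs_le.mpr ht)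
      linarith
    · exact (hBS hz).2 (by simp [h₁.eq_zero hρ₁])
  set E : Set ℂ := E₂ ∪ I₁ with hE
  have hEc : IsCompact E := hE₂c.union hI₁c
  have hEp : E ⊆ ball 0 1 ∧ ∀ z ∈ E, (F z).re = 0 → F z = 0 := by
    have hA : A ⊆ ball 0 1 ∧ ∀ z ∈ A, (F z).re = 0 → F z = 0 :=
      ⟨fun z hz => (hAS hz).1, fun z hz h => absurd h (hAS hz).2⟩
    have hB : B ⊆ ball 0 1 ∧ ∀ z ∈ B, (F z).re = 0 → F z = 0 :=
      ⟨fun z hz => (hBS hz).1, fun z hz h => absurd h (hBS hz).2⟩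
    constructor
    · rintro z (((hz | ⟨t, ht, rfl⟩) | hz) | ⟨t, ht, rfl⟩)
      exacts [hA.1 hz, (hseg hε₂ hε₂ρ h₂ t ht).1, hB.1 hz, (hseg hε₁ hε₁ρ h₁ t ht).1]
    · rintro z (((hz | ⟨t, ht, rfl⟩) | hz) | ⟨t, ht, rfl⟩)
      exacts [hA.2 z hz, (hseg hε₂ hε₂ρ h₂ t ht).2, hB.2 z hz, (hseg hε₁ hε₁ρ h₁ t ht).2]
  -- work in the coordinate in which the first segment is `[-1, 1]`
  set φ : ℂ → ℂ := fun w => z₁ + (ε₁ * w) / d₁ with hφ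
  have hε₁0 : (ε₁ : ℂ) ≠ 0 := by exact_mod_cast hε₁.ne'
  have hφc : Continuous φ := by fun_prop
  obtain ⟨r, hr, hr1, hrE⟩ : ∃ r > 0, r ≤ 1 ∧ ∀ w, φ w ∈ E₂ → r ≤ ‖w‖ := by
    have : ∀ᶠ w in 𝓝 (0 : ℂ), φ w ∉ E₂ := by
      refine hφc.continuousAt.eventually (hE₂c.isClosed.isOpen_compl.mem_nhds ?_)
      simpa [hφ] using hz₁
    obtain ⟨r, hr, hball⟩ := Metric.eventually_nhds_iff.mp this
    refine ⟨min r 1, by positivity, min_le_right _ _, fun w hw => ?_⟩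
    by_contra hlt
    push Not at hlt
    exact hball (by rw [dist_zero_right]; exact hlt.trans_le (min_le_left _ _)) hw
  have hside : ∀ y : ℝ, y ≠ 0 → 2 * |y| < r → ∃ w : ℂ, w.im = y ∧ ‖w‖ < r ∧ φ w ∉ E ∧
      ∃ p ∈ connectedComponentIn Eᶜ (φ w), 1 ≤ ‖p‖ := by
    intro y hy hyr
    have habs : |ε₁ * y| = ε₁ * |y| := by rw [abs_mul, abs_of_pos hε₁]
    obtain ⟨w, hw, hwn, hw0⟩ := h₁.exists_re_eq_zero hF.continuousOn (y := ε₁ * y)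
      (mul_ne_zero hε₁.ne' hy) (by rw [habs]; nlinarith [abs_nonneg y])
    have e : φ (w / ε₁) = z₁ + w / d₁ := by
      simp only [hφ]; field_simp
    have him : (w / ε₁ : ℂ).im = y := by
      rw [Complex.div_ofReal_im, hw]; field_simp
    have hnorm : ‖w / ε₁‖ < r := by
      rw [norm_div, Complex.norm_real, Real.norm_eq_abs, abs_of_pos hε₁, div_lt_iff₀ hε₁]
      rw [habs] at hwn
      nlinarith
    have hwE : φ (w / ε₁) ∉ E := by
      rintro (h | ⟨t, ht, h⟩)
      · linarith [hrE _ h]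
      · have e3 : (w / ε₁ : ℂ) = t := by
          simp only [hφ, Complex.ofReal_mul] at h
          have h4 := add_left_cancel h
          rw [div_left_inj' hd₁] at h4
          exact (mul_left_cancel₀ hε₁0 h4).symm
        rw [e3, Complex.ofReal_im] at him
        exact hy him.symm
    refine ⟨w / ε₁, him, hnorm, hwE, ?_⟩
    exact exists_mem_connectedComponentIn_one_le_norm hF hnc hEc hEp.1 hEp.2 hwE (by rw [e, hw0])
  obtain ⟨a, ha, har, haE, p, hp, hp1⟩ := hside (r / 4) (by positivity) (by
    rw [abs_of_pos (by positivity)]; linarith)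
  obtain ⟨b, hb, hbr, hbE, q, hq, hq1⟩ := hside (-(r / 4)) (by
    rw [neg_ne_zero]; positivity) (by rw [abs_neg, abs_of_pos (by positivity)]; linarith)
  have hG : IsPreconnected (connectedComponentIn Eᶜ (φ a) ∪ {z : ℂ | 1 ≤ ‖z‖} ∪
      connectedComponentIn Eᶜ (φ b)) :=
    IsPreconnected.union q (Or.inr hq1) hq (IsPreconnected.union p hp hp1
      isPreconnected_connectedComponentIn isPreconnected_one_le_norm)
      isPreconnected_connectedComponentIn
  have hGE : connectedComponentIn Eᶜ (φ a) ∪ {z : ℂ | 1 ≤ ‖z‖} ∪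
      connectedComponentIn Eᶜ (φ b) ⊆ Eᶜ := by
    refine union_subset (union_subset (connectedComponentIn_subset _ _) fun z hz hzE => ?_)
      (connectedComponentIn_subset _ _)
    have := mem_ball_zero_iff.mp (hEp.1 hzE)
    rw [mem_ofPred_eq] at hz
    linarith
  obtain ⟨s, hs, hs'⟩ := exists_continuousOn_sq_eq_div hEc.isClosed hG hGE
    (Or.inl (Or.inl (mem_connectedComponentIn haE))) (Or.inr (mem_connectedComponentIn hbE))
  have hmaps : MapsTo φ (φ ⁻¹' E₂ ∪ Complex.ofReal '' Icc (-1) 1) E := by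
    rintro w (hw | ⟨t, ht, rfl⟩)
    · exact Or.inl hw
    · exact Or.inr ⟨t, ht, by simp [hφ]⟩
  have hpre : IsPreconnected (φ ⁻¹' E₂) := by
    have e : φ ⁻¹' E₂ = (fun z => (z - z₁) * d₁ / ε₁) '' E₂ := by
      ext w
      constructor
      · intro hw
        refine ⟨φ w, hw, ?_⟩
        simp only [hφ]; field_simp; ring
      · rintro ⟨z, hz, rfl⟩
        have : φ ((z - z₁) * d₁ / ε₁) = z := by simp only [hφ]; field_simp; ring
        rwa [mem_preimage, this]
    rw [e]
    exact hE₂p.image _ (by fun_prop)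
  refine not_exists_sq_eq_div_of_crossing hpre ?_ ?_ hr1 hrE har hbr (by rw [ha]; positivity)
    (by rw [hb]; linarith) (s := s ∘ φ) (hs.comp hφc.continuousOn hmaps) ?_
  · refine Or.inl (Or.inl ?_)
    simpa [hφ] using hA1
  · refine Or.inr ?_
    simpa [hφ] using hB1
  · intro w hw
    rw [Function.comp_apply, hs' _ (hmaps hw)]
    have e1 : φ w - φ a = ε₁ / d₁ * (w - a) := by simp only [hφ]; ring
    have e2 : φ w - φ b = ε₁ / d₁ * (w - b) := by simp only [hφ]; ring
    rw [e1, e2, mul_div_mul_left _ _ (div_ne_zero hε₁0 hd₁)]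

/-- If `{re F ≠ 0}` has at most `N` components, `F` has at most `N ^ 2` zeros, provided that they
are all simple. -/
theorem encard_zeros_le {F : ℂ → ℂ} (hF : AnalyticOnNhd ℂ F (ball 0 1))
    (hnc : ∀ z ∈ ball (0 : ℂ) 1, ¬ ∀ᶠ w in 𝓝 z, F w = F z)
    (hd : ∀ z ∈ ball (0 : ℂ) 1, F z = 0 → deriv F z ≠ 0) {N : ℕ} 
    (hN : {C | ∃ x ∈ ball (0 : ℂ) 1 \ {w | (F w).re = 0},
      C = connectedComponentIn (ball (0 : ℂ) 1 \ {w | (F w).re = 0}) x}.encard ≤ N) :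
    {z ∈ ball (0 : ℂ) 1 | F z = 0}.encard ≤ N * N := by
  set S := ball (0 : ℂ) 1 \ {w | (F w).re = 0} with hS
  set 𝒞 := {C | ∃ x ∈ S, C = connectedComponentIn S x} with h𝒞
  have hρ : ∀ z : ℂ, ∃ ρ > 0, z ∈ ball (0 : ℂ) 1 → F z = 0 →
      NearlyLinearAt F z (deriv F z) ρ := by
    intro z
    by_cases hz : z ∈ ball (0 : ℂ) 1 ∧ F z = 0
    · obtain ⟨ρ, h, h'⟩ := exists_nearlyLinearAt hz.1 (hF z hz.1) hz.2 (hd z hz.1 hz.2)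
      exact ⟨ρ, h, fun _ _ => h'⟩
    · exact ⟨1, one_pos, fun h h' => absurd ⟨h, h'⟩ hz⟩
  choose ρ hρ hlin using hρ
  set f : ℂ → Set ℂ × Set ℂ := fun z =>
    (connectedComponentIn S (z + ((1 : ℝ) * (ρ z / 2) : ℝ) / deriv F z),
      connectedComponentIn S (z + ((-1 : ℝ) * (ρ z / 2) : ℝ) / deriv F z)) with hf
  have hmem : ∀ z ∈ {z ∈ ball (0 : ℂ) 1 | F z = 0}, ∀ σ : ℝ, |σ| = 1 →
      connectedComponentIn S (z + (σ * (ρ z / 2) : ℝ) / deriv F z) ∈ 𝒞 := by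
    intro z hz σ hσ
    have := (hlin z hz.1 hz.2).connectedComponentIn_eq σ hσ (x := ρ z / 2)
      (by linarith [hρ z]) (by linarith)
    exact ⟨_, connectedComponentIn_subset _ _ this, rfl⟩
  have hmaps : MapsTo f {z ∈ ball (0 : ℂ) 1 | F z = 0} (𝒞 ×ˢ 𝒞) := fun z hz =>
    ⟨hmem z hz 1 (by simp), hmem z hz (-1) (by simp)⟩
  have hinj : InjOn f {z ∈ ball (0 : ℂ) 1 | F z = 0} := by
    intro z hz w hw hzw
    rw [hf, Prod.mk.injEq] at hzw
    refine eq_of_connectedComponentIn_eq hF hnc (hd z hz.1 hz.2) (hd w hw.1 hw.2) (hρ z) (hρ w)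
      (hlin z hz.1 hz.2) (hlin w hw.1 hw.2) fun σ hσ => ?_
    rcases (abs_eq zero_le_one).mp hσ with rfl | rfl
    exacts [hzw.1, hzw.2]
  calc _ ≤ (𝒞 ×ˢ 𝒞).encard := encard_le_encard_of_injOn hmaps hinj
    _ = 𝒞.encard * 𝒞.encard := by rw [encard_prod]
    _ ≤ N * N := by gcongr

/-- **Bloch's theorem**, with a non-optimal constant. -/
theorem exists_ball_subset_image {f : ℂ → ℂ} {z₀ : ℂ} {ρ : ℝ} (hρ : 0 < ρ)
    (hf : DifferentiableOn ℂ f (ball z₀ ρ)) :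
    ∃ w, ball w (ρ * ‖deriv f z₀‖ / 128) ⊆ f '' ball z₀ ρ := by
  rcases eq_or_ne (deriv f z₀) 0 with h0 | h0
  · exact ⟨0, by simp [h0]⟩
  have h0' := norm_pos_iff.mpr h0
  set R := ρ / 2 with hR
  have hR0 : 0 < R := by positivity
  have hRρ : closedBall z₀ R ⊆ ball z₀ ρ := closedBall_subset_ball (by linarith)
  have hf' : DifferentiableOn ℂ (deriv f) (ball z₀ ρ) := hf.deriv isOpen_ball
  obtain ⟨p, hp, hmax⟩ := (isCompact_closedBall z₀ R).exists_isMaxOn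
    ⟨z₀, mem_closedBall_self hR0.le⟩ (f := fun z => ‖deriv f z‖ * (R - ‖z - z₀‖))
    (((hf'.continuousOn.mono hRρ).norm).mul (by fun_prop))
  set M := ‖deriv f p‖ with hM
  have hmax' : ∀ z ∈ closedBall z₀ R, ‖deriv f z‖ * (R - ‖z - z₀‖) ≤ M * (R - ‖p - z₀‖) :=
    fun z hz => hmax hz
  have h1 : ‖deriv f z₀‖ * R ≤ M * (R - ‖p - z₀‖) := by
    simpa using hmax' z₀ (mem_closedBall_self hR0.le)
  have hpR : ‖p - z₀‖ ≤ R := by simpa [dist_eq_norm] using hp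
  have hpos : 0 < M * (R - ‖p - z₀‖) := (mul_pos h0' hR0).trans_le h1
  have hM0 : 0 < M := pos_of_mul_pos_left hpos (by linarith)
  set t := (R - ‖p - z₀‖) / 2 with ht
  have ht0 : 0 < t := by
    have := pos_of_mul_pos_right hpos hM0.le
    positivity
  have hpt : ∀ z ∈ ball p t, ‖z - z₀‖ ≤ R - t := by
    intro z hz
    rw [mem_ball, dist_eq_norm] at hz
    have := norm_sub_le_norm_sub_add_norm_sub z p z₀
    linarith
  have hsub : ball p t ⊆ ball z₀ ρ := fun z hz => by
    have := hpt z hz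
    rw [mem_ball, dist_eq_norm]; linarith
  have hbd : ∀ z ∈ ball p t, ‖deriv f z‖ ≤ 2 * M := by
    intro z hz
    have h2 := hpt z hz
    have h3 := hmax' z (by rw [mem_closedBall, dist_eq_norm]; linarith)
    have h4 : ‖deriv f z‖ * t ≤ M * (R - ‖p - z₀‖) :=
      (mul_le_mul_of_nonneg_left (by linarith) (norm_nonneg _)).trans h3
    have h5 : M * (R - ‖p - z₀‖) = 2 * M * t := by rw [ht]; ring
    exact le_of_mul_le_mul_right (h4.trans_eq h5) ht0
  have hmaps : MapsTo (deriv f) (ball p t) (closedBall (deriv f p) (3 * M)) := by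
    intro z hz
    rw [mem_closedBall, dist_eq_norm]
    refine (norm_sub_le _ _).trans ?_
    linarith [hbd z hz]
  have hsmall : ∀ z ∈ closedBall p (t / 8), ‖deriv f z - deriv f p‖ ≤ M / 2 := by
    intro z hz
    rw [mem_closedBall] at hz
    have := Complex.dist_le_div_mul_dist_of_mapsTo_ball (hf'.mono hsub) hmaps (z := z)
      (by rw [mem_ball]; linarith)
    rw [dist_eq_norm (deriv f z)] at this
    calc _ ≤ _ := this
      _ ≤ 3 * M / t * (t / 8) := by gcongr
      _ ≤ M / 2 := by field_simp; linarith
  have hsub' : closedBall p (t / 8) ⊆ ball p t := closedBall_subset_ball (by linarith)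
  have hlow : ∀ z ∈ closedBall p (t / 8), M / 2 * ‖z - p‖ ≤ ‖f z - f p‖ := by
    intro z hz
    have h6 := (convex_closedBall p (t / 8)).norm_image_sub_le_of_norm_hasDerivWithin_le
      (f := fun w => f w - deriv f p * w) (f' := fun w => deriv f w - deriv f p) (C := M / 2)
      (fun w hw => by
        have hd : HasDerivAt f (deriv f w) w :=
          (hf.differentiableAt (isOpen_ball.mem_nhds (hsub (hsub' hw)))).hasDerivAt
        exact ((hd.sub ((hasDerivAt_id w).const_mul (deriv f p))).congr_deriv
          (by rw [mul_one])).hasDerivWithinAt)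
      hsmall (mem_closedBall_self (by positivity)) hz
    have e : deriv f p * (z - p)
        = (f z - f p) - ((f z - deriv f p * z) - (f p - deriv f p * p)) := by ring
    have h7 : M * ‖z - p‖ ≤ ‖f z - f p‖ + M / 2 * ‖z - p‖ := by
      rw [hM, ← norm_mul, e]
      exact (norm_sub_le _ _).trans (by gcongr)
    linarith
  have hdc : DiffContOnCl ℂ f (ball p (t / 8)) := by
    refine (hf.mono ?_).diffContOnCl
    rw [closure_ball _ (by positivity)]
    exact hsub'.trans hsub
  have himg := hdc.ball_subset_image_closedBall (by positivity) (ε := M / 2 * (t / 8))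
    (fun z hz => by
      have := hlow z (sphere_subset_closedBall hz)
      rwa [mem_sphere_iff_norm.mp hz] at this) (by
      have hev : ∀ᶠ z in 𝓝[≠] p, f z ≠ f p := by
        filter_upwards [self_mem_nhdsWithin, mem_nhdsWithin_of_mem_nhds
          (closedBall_mem_nhds p (show 0 < t / 8 by positivity))] with z hz hz' heq
        have h8 := hlow z hz'
        have h9 : 0 < ‖z - p‖ := norm_pos_iff.mpr (sub_ne_zero.mpr hz)
        rw [heq, sub_self, norm_zero] at h8
        nlinarith
      exact hev.frequently.filter_mono nhdsWithin_le_nhds)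
  refine ⟨f p, (ball_subset_ball ?_).trans (himg.trans (image_mono (hsub'.trans hsub)))⟩
  have h5 : M * (R - ‖p - z₀‖) = 2 * M * t := by rw [ht]; ring
  rw [h5, hR] at h1
  linarith

/-- For all but countably many real `t`, the function `F` takes the value `t * I` at most `p`
times in the unit disc. -/
def HasFewImaginaryValues (p : ℕ) (F : ℂ → ℂ) : Prop :=
  ∃ T : Set ℝ, T.Countable ∧ ∀ t ∉ T, {z ∈ ball (0 : ℂ) 1 | F z = t * Complex.I}.encard ≤ p

theorem exists_mem_Ioo_notMem {T : Set ℝ} (hT : T.Countable) {a b : ℝ} (hab : a < b) :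
    ∃ t ∈ Ioo a b, t ∉ T := by
  obtain ⟨t, ht, ht'⟩ := (hT.dense_compl ℝ).inter_open_nonempty _ isOpen_Ioo
    (nonempty_Ioo.mpr hab)
  exact ⟨t, ht, ht'⟩

theorem exists_exp_eq {f : ℂ → ℂ} {z₀ : ℂ} {ρ : ℝ} (hρ : 0 < ρ)
    (hf : DifferentiableOn ℂ f (ball z₀ ρ)) (h0 : ∀ z ∈ ball z₀ ρ, f z ≠ 0) :
    ∃ g : ℂ → ℂ, (∀ z ∈ ball z₀ ρ, HasDerivAt g (deriv f z / f z) z) ∧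
      ∀ z ∈ ball z₀ ρ, Complex.exp (g z) = f z := by
  have hz₀ := mem_ball_self hρ (x := z₀)
  obtain ⟨g, hg0, hg⟩ := (((hf.deriv isOpen_ball).div hf h0).isExactOn_ball).with_val_at z₀
    (Complex.log (f z₀))
  refine ⟨g, hg, fun z hz => ?_⟩
  have hder : ∀ w ∈ ball z₀ ρ, HasDerivAt (fun w => f w * Complex.exp (-g w)) 0 w := by
    intro w hw
    have hd : HasDerivAt f (deriv f w) w :=
      (hf.differentiableAt (isOpen_ball.mem_nhds hw)).hasDerivAt
    have := hd.mul ((hg w hw).neg.cexp)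
    refine this.congr_deriv ?_
    have := h0 w hw
    simp only [Pi.div_apply]
    field_simp
    ring
  have hconst := (isOpen_ball (x := z₀) (ε := ρ)).is_const_of_deriv_eq_zero
    (convex_ball z₀ ρ).isPreconnected
    (fun w hw => (hder w hw).differentiableAt.differentiableWithinAt)
    (fun w hw => (hder w hw).deriv) hz hz₀
  simp only [hg0, Complex.exp_neg, Complex.exp_log (h0 z₀ hz₀), mul_inv_cancel₀ (h0 z₀ hz₀)]
    at hconst
  have := Complex.exp_ne_zero (g z)
  field_simp at hconst
  exact hconst.symm

/-- A Landau-type estimate: the logarithmic derivative of `F - t₀ * I` on a disc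
where it has no zeros. -/
theorem norm_deriv_le_of_hasFewImaginaryValues {F : ℂ → ℂ} {p : ℕ} (hp : HasFewImaginaryValues p F)
    (hF : DifferentiableOn ℂ F (ball 0 1)) {z₀ : ℂ} {ρ : ℝ} (hρ : 0 < ρ)
    (hsub : ball z₀ ρ ⊆ ball 0 1) {t₀ : ℝ} (h0 : ∀ z ∈ ball z₀ ρ, F z ≠ t₀ * Complex.I) :
    ‖deriv F z₀‖ ≤ 128 * (2 * Real.pi * (p + 2) + 2) / ρ * ‖F z₀ - t₀ * Complex.I‖ := by
  obtain ⟨T, hT, hcard⟩ := hp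
  have hz₀ := mem_ball_self hρ (x := z₀)
  have hd : ∀ z, deriv (fun z => F z - t₀ * Complex.I) z = deriv F z := fun z => by
    rw [deriv_sub_const]
  obtain ⟨g, hg, hexp⟩ := exists_exp_eq hρ ((hF.mono hsub).sub_const (t₀ * Complex.I))
    fun z hz => sub_ne_zero.mpr (h0 z hz)
  by_contra! hlt
  have hpi := Real.pi_pos
  set C := 2 * Real.pi * (p + 2) + 2 with hC
  have hnz : 0 < ‖F z₀ - t₀ * Complex.I‖ := norm_pos_iff.mpr (sub_ne_zero.mpr (h0 z₀ hz₀))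
  have hgd : ‖deriv g z₀‖ = ‖deriv F z₀‖ / ‖F z₀ - t₀ * Complex.I‖ := by
    rw [(hg z₀ hz₀).deriv, hd, norm_div]
  have hbig : C ≤ ρ * ‖deriv g z₀‖ / 128 := by
    rw [hgd]
    rw [div_mul_eq_mul_div, div_lt_iff₀ hρ] at hlt
    rw [← mul_div_assoc, div_div, le_div_iff₀ (by positivity)]
    linarith
  obtain ⟨w, hw⟩ := exists_ball_subset_image hρ
    (fun z hz => (hg z hz).differentiableAt.differentiableWithinAt)
  replace hw := (ball_subset_ball hbig).trans hw
  have hT' : {σ : ℝ | t₀ + Real.exp σ ∈ T}.Countable :=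
    hT.preimage_of_injOn fun a _ b _ hab => by simpa using hab
  obtain ⟨σ, hσ, hσT⟩ := exists_mem_Ioo_notMem hT' (show w.re < w.re + 1 by linarith)
  set k₀ : ℤ := ⌈(w.im - Real.pi / 2) / (2 * Real.pi)⌉ with hk₀
  set x : Fin (p + 1) → ℂ := fun j =>
    ⟨σ, Real.pi / 2 + 2 * Real.pi * (k₀ + (j : ℕ))⟩ with hx
  have hxball : ∀ j, x j ∈ ball w C := by
    intro j
    have h1 := Int.le_ceil ((w.im - Real.pi / 2) / (2 * Real.pi))
    have h2 := Int.ceil_lt_add_one ((w.im - Real.pi / 2) / (2 * Real.pi))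
    rw [← hk₀] at h1 h2
    rw [div_le_iff₀ (by positivity)] at h1
    rw [← sub_lt_iff_lt_add, lt_div_iff₀ (by positivity)] at h2
    have hj : ((j : ℕ) : ℝ) ≤ p := by exact_mod_cast Nat.lt_succ_iff.mp j.2
    have hj' : 2 * Real.pi * (j : ℕ) ≤ 2 * Real.pi * p := by gcongr
    have hj0 : 0 ≤ 2 * Real.pi * (j : ℕ) := by positivity
    rw [mem_ball, dist_eq_norm]
    refine (Complex.norm_le_abs_re_add_abs_im _).trans_lt ?_
    have e1 : |(x j - w).re| ≤ 1 := by
      simp only [hx, Complex.sub_re]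
      rw [abs_le]; constructor <;> linarith [hσ.1, hσ.2]
    have e2 : |(x j - w).im| ≤ 2 * Real.pi * (p + 1) := by
      simp only [hx, Complex.sub_im]
      rw [abs_le]
      constructor <;> nlinarith
    rw [hC]
    nlinarith
  have hxexp : ∀ j, Complex.exp (x j) = Real.exp σ * Complex.I := by
    intro j
    have e : x j = (σ + Real.pi / 2 * Complex.I) + ((k₀ + (j : ℕ) : ℤ) : ℂ) *
        (2 * Real.pi * Complex.I) := by
      apply Complex.ext
      · simp [hx]
      · simp [hx]; ring
    rw [e, Complex.exp_add, Complex.exp_int_mul_two_pi_mul_I, Complex.exp_add,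
      Complex.exp_pi_div_two_mul_I, mul_one, Complex.ofReal_exp]
  choose ζ hζ hζx using fun j => hw (hxball j)
  have hinj : Function.Injective ζ := by
    intro i j hij
    have : x i = x j := by rw [← hζx, ← hζx, hij]
    have h3 := congrArg Complex.im this
    simp only [hx, add_right_inj, mul_eq_mul_left_iff] at h3
    rcases h3 with h3 | h3
    · exact Fin.ext (by exact_mod_cast h3)
    · exact absurd h3 (by positivity)
  have hrange : range ζ ⊆ {z ∈ ball (0 : ℂ) 1 | F z = (t₀ + Real.exp σ : ℝ) * Complex.I} := by
    rintro _ ⟨j, rfl⟩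
    refine ⟨hsub (hζ j), ?_⟩
    have h4 := hexp _ (hζ j)
    rw [hζx, hxexp] at h4
    push_cast at h4 ⊢
    linear_combination -h4
  have h5 := (encard_le_encard hrange).trans (hcard _ hσT)
  rw [← image_univ, hinj.injOn.encard_image, encard_univ] at h5
  simp at h5
  norm_cast at h5
  omega

theorem exists_forall_le_dist {X : Type*} [MetricSpace X] {s : Set X} (hs : s.Infinite) (p : ℕ) :
    ∃ κ > 0, ∀ Z : Set X, Z.encard ≤ p → ∃ x ∈ s, ∀ a ∈ Z, κ ≤ dist a x := by
  obtain ⟨t, hts, htc⟩ := hs.exists_subset_card_eq (p + 1)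
  obtain ⟨κ, hκ, hsep⟩ : ∃ κ > 0, ∀ x ∈ t, ∀ y ∈ t, x ≠ y → 2 * κ ≤ dist x y := by
    have hall : ∀ᶠ κ : ℝ in 𝓝[>] 0, ∀ x ∈ t, ∀ y ∈ t, x ≠ y → 2 * κ ≤ dist x y := by
      refine (t.eventually_all).mpr fun x _ => (t.eventually_all).mpr fun y _ => ?_
      by_cases hxy : x = y
      · exact Eventually.of_forall fun κ h => absurd hxy h
      · have hd := dist_pos.mpr hxy
        filter_upwards [Ioo_mem_nhdsGT (half_pos hd)] with κ hκ _
        linarith [hκ.2]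
    obtain ⟨κ, h, hκ⟩ := (hall.and self_mem_nhdsWithin).exists
    exact ⟨κ, hκ, h⟩
  refine ⟨κ, hκ, fun Z hZ => ?_⟩
  by_contra! hcon
  choose! a ha haκ using fun x (hx : x ∈ (t : Set X)) => hcon x (hts hx)
  have hinj : InjOn a t := by
    intro x hx y hy hxy
    by_contra hne
    have h1 := hsep x hx y hy hne
    have h2 := dist_triangle_left x y (a x)
    have h3 := haκ x hx
    have h4 := haκ y hy
    rw [← hxy] at h4
    linarith
  have h5 := (encard_le_encard_of_injOn (fun x hx => ha x hx) hinj).trans hZ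
  rw [encard_coe_eq_coe_finsetCard, htc] at h5
  norm_cast at h5
  omega

/-- Growth of `F - t₀ * I` along a path that keeps away from the zeros. -/
theorem norm_sub_le_of_path {F : ℂ → ℂ} {p : ℕ} (hp : HasFewImaginaryValues p F)
    (hF : DifferentiableOn ℂ F (ball 0 1)) {t₀ : ℝ} {γ γ' : ℝ → ℂ} {ℓ d c : ℝ} (hd : 0 < d)
    (hγ : ∀ s, HasDerivAt γ (γ' s) s) (hc : ∀ s, ‖γ' s‖ ≤ c)
    (hball : ∀ s ∈ Icc 0 ℓ, ball (γ s) d ⊆ ball 0 1)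
    (hzero : ∀ s ∈ Icc 0 ℓ, ∀ a ∈ ball (0 : ℂ) 1, F a = t₀ * Complex.I → d ≤ dist a (γ s)) :
    ∀ s ∈ Icc 0 ℓ, ‖F (γ s) - t₀ * Complex.I‖ ≤ ‖F (γ 0) - t₀ * Complex.I‖ *
      Real.exp (128 * (2 * Real.pi * (p + 2) + 2) / d * c * s) := by
  intro s hs
  set L := 128 * (2 * Real.pi * (p + 2) + 2) / d with hL
  have hmem : ∀ s ∈ Icc 0 ℓ, γ s ∈ ball (0 : ℂ) 1 := fun s hs => hball s hs (mem_ball_self hd)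
  have hder : ∀ s ∈ Icc 0 ℓ, HasDerivAt (fun s => F (γ s) - t₀ * Complex.I)
      (deriv F (γ s) * γ' s) s := fun s hs =>
    (((hF.differentiableAt (isOpen_ball.mem_nhds (hmem s hs))).hasDerivAt).comp s
      (hγ s)).sub_const _
  have h := norm_le_gronwallBound_of_norm_deriv_right_le (a := 0) (b := ℓ) (K := L * c) (ε := 0)
    (fun s hs => (hder s hs).continuousAt.continuousWithinAt)
    (fun s hs => (hder s (Ico_subset_Icc_self hs)).hasDerivWithinAt) le_rfl (fun s hs => by
      have hs' := Ico_subset_Icc_self hs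
      have h1 := norm_deriv_le_of_hasFewImaginaryValues hp hF hd (hball s hs') (t₀ := t₀)
        (fun z hz h => by
          have := hzero s hs' z (hball s hs' hz) h
          rw [mem_ball] at hz; linarith)
      have h2 : 0 ≤ L := by have := Real.pi_pos; positivity
      rw [norm_mul, add_zero]
      calc _ ≤ L * ‖F (γ s) - t₀ * Complex.I‖ * c := by gcongr; exact hc s
        _ = _ := by ring) s hs
  rwa [gronwallBound_ε0, sub_zero] at h

/-- A function with few imaginary values is bounded on compact subsets of the unit disc in terms
of its size near the centre. -/
theorem exists_growth_bound (p : ℕ) {r R : ℝ} (hr : 0 < r) (hR0 : 0 < R) (hR : R < 1) :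
    ∃ A : ℝ, ∀ F : ℂ → ℂ, DifferentiableOn ℂ F (ball 0 1) → HasFewImaginaryValues p F →
      (∀ z ∈ ball (0 : ℂ) 1, ‖z‖ < r → ‖F z‖ ≤ 1) → ∀ z ∈ closedBall (0 : ℂ) R, ‖F z‖ ≤ A := by
  obtain ⟨κ₁, hκ₁, hrad⟩ := exists_forall_le_dist (Ioo_infinite (show R < (R + 1) / 2 by linarith)) p
  have hsph : (sphere (0 : ℂ) 1).Infinite := by
    refine (isPreconnected_sphere (by rw [Complex.rank_real_complex]; norm_num) 0
      1).infinite_of_nontrivial ⟨1, by simp, -1, by simp, ?_⟩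
    norm_num [Complex.ext_iff]
  obtain ⟨κ₂, hκ₂, hdir⟩ := exists_forall_le_dist hsph p
  set d := min (min κ₁ ((1 - R) / 2)) (r * κ₂ / 2) with hd
  have hd0 : 0 < d := by
    have : 0 < 1 - R := by linarith
    positivity
  have hdκ : d ≤ κ₁ := (min_le_left _ _).trans (min_le_left _ _)
  have hdR : d ≤ (1 - R) / 2 := (min_le_left _ _).trans (min_le_right _ _)
  have hdr : d ≤ r * κ₂ / 2 := min_le_right _ _
  set L := 128 * (2 * Real.pi * (p + 2) + 2) / d with hL
  have hL0 : 0 ≤ L := by have := Real.pi_pos; positivity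
  refine ⟨4 * Real.exp L * Real.exp (L * Real.pi) + 3, fun F hF hp hFr z hz => ?_⟩
  obtain ⟨T, hT, hcard⟩ := id hp
  obtain ⟨t₀, ht₀, ht₀T⟩ := exists_mem_Ioo_notMem hT (show (2 : ℝ) < 3 by norm_num)
  set Z := {z ∈ ball (0 : ℂ) 1 | F z = t₀ * Complex.I} with hZ
  have hZc : Z.encard ≤ p := hcard t₀ ht₀T
  have hnt : ‖(t₀ * Complex.I : ℂ)‖ = t₀ := by
    rw [norm_mul, Complex.norm_I, mul_one, Complex.norm_real, Real.norm_eq_abs,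
      abs_of_pos (by linarith [ht₀.1])]
  have hZr : ∀ a ∈ Z, r ≤ ‖a‖ := by
    intro a ha
    by_contra! hlt
    have := hFr a ha.1 hlt
    rw [ha.2, hnt] at this
    linarith [ht₀.1]
  obtain ⟨ρ, hρ, hρZ⟩ := hrad (norm '' Z) ((encard_image_le _ _).trans hZc)
  obtain ⟨ω, hω, hωZ⟩ := hdir ((fun a : ℂ => a / ‖a‖) '' Z) ((encard_image_le _ _).trans hZc)
  have hω1 : ‖ω‖ = 1 := by simpa using hω
  have hρ0 : 0 < ρ := hR0.trans hρ.1
  have hballs : ∀ w : ℂ, ‖w‖ ≤ ρ → ball w d ⊆ ball 0 1 := by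
    intro w hw
    refine ball_subset_ball' ?_
    rw [dist_zero_right]
    linarith [hρ.2]
  have hray := norm_sub_le_of_path hp hF (t₀ := t₀) (γ := fun s => s * ω) (γ' := fun _ => ω)
    (ℓ := ρ) (c := 1) hd0 (fun s => by simpa using (Complex.ofRealCLM.hasDerivAt (x := s)).mul_const ω)
    (fun s => hω1.le) (fun s hs => hballs _ (by
      rw [norm_mul, hω1, mul_one, Complex.norm_real, Real.norm_eq_abs, abs_of_nonneg hs.1]
      exact hs.2)) (fun s hs a ha haF => by
      have h1 := hωZ _ (mem_image_of_mem _ ⟨ha, haF⟩)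
      have h2 := hZr a ⟨ha, haF⟩
      have ha0 : (‖a‖ : ℂ) ≠ 0 := by exact_mod_cast (hr.trans_le h2).ne'
      rw [dist_eq_norm] at h1 ⊢
      have h3 : ‖a‖ * ‖a / ‖a‖ - ω‖ ≤ 2 * ‖a - s * ω‖ := by
        have e : (‖a‖ : ℂ) * (a / ‖a‖ - ω) = (a - s * ω) + ((s - ‖a‖ : ℝ) : ℂ) * ω := by
          push_cast; field_simp; ring
        have h4 : |s - ‖a‖| ≤ ‖a - s * ω‖ := by
          have := abs_norm_sub_norm_le a (s * ω)
          rwa [norm_mul, hω1, mul_one, Complex.norm_real, Real.norm_eq_abs, abs_of_nonneg hs.1,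
            abs_sub_comm] at this
        calc ‖a‖ * ‖a / ‖a‖ - ω‖ = ‖(‖a‖ : ℂ) * (a / ‖a‖ - ω)‖ := by
              rw [norm_mul, Complex.norm_real, norm_norm]
          _ ≤ ‖a - s * ω‖ + |s - ‖a‖| := by
              rw [e]
              refine (norm_add_le _ _).trans_eq ?_
              rw [norm_mul, hω1, mul_one, Complex.norm_real, Real.norm_eq_abs]
          _ ≤ _ := by linarith
      have h5 : r * κ₂ ≤ ‖a‖ * ‖a / ‖a‖ - ω‖ := by gcongr
      linarith) ρ ⟨hρ0.le, le_rfl⟩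
  have h0 : ‖F 0 - t₀ * Complex.I‖ ≤ 4 := by
    refine (norm_sub_le _ _).trans ?_
    rw [hnt]
    linarith [hFr 0 (by simp) (by simpa using hr), ht₀.2]
  have hray' : ‖F (ρ * ω) - t₀ * Complex.I‖ ≤ 4 * Real.exp L := by
    refine hray.trans ?_
    simp only [Complex.ofReal_zero, zero_mul, mul_one]
    gcongr
    exact mul_le_of_le_one_right hL0 (by linarith [hρ.2])
  have hcirc : ∀ w ∈ sphere (0 : ℂ) ρ, ‖F w - t₀ * Complex.I‖ ≤
      4 * Real.exp L * Real.exp (L * Real.pi) := by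
    intro w hw
    rw [mem_sphere_zero_iff_norm] at hw
    set θ := Complex.arg (w / (ρ * ω)) with hθ
    have hw' : ρ * ω * Complex.exp (θ * Complex.I) = w := by
      have h1 := Complex.norm_mul_exp_arg_mul_I (w / (ρ * ω))
      rw [norm_div, norm_mul, hω1, hw, Complex.norm_real, Real.norm_eq_abs, abs_of_pos hρ0,
        mul_one, div_self hρ0.ne', Complex.ofReal_one, one_mul] at h1
      rw [h1]
      have : ω ≠ 0 := by rintro rfl; simp at hω1
      have : (ρ : ℂ) ≠ 0 := by exact_mod_cast hρ0.ne'
      field_simp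
    have hn : ∀ s : ℝ, ‖ρ * ω * Complex.exp (s * θ * Complex.I)‖ = ρ := by
      intro s
      rw [norm_mul, norm_mul, hω1, Complex.norm_real, Real.norm_eq_abs, abs_of_pos hρ0,
        ← Complex.ofReal_mul, Complex.norm_exp_ofReal_mul_I, mul_one, mul_one]
    have h := norm_sub_le_of_path hp hF (t₀ := t₀)
      (γ := fun s => ρ * ω * Complex.exp (s * θ * Complex.I))
      (γ' := fun s => ρ * ω * (Complex.exp (s * θ * Complex.I) * (θ * Complex.I)))
      (ℓ := 1) (c := Real.pi) hd0
      (fun s => by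
        have h1 : HasDerivAt (fun s : ℝ => (s : ℂ) * θ * Complex.I) (θ * Complex.I) s := by
          simpa using ((Complex.ofRealCLM.hasDerivAt (x := s)).mul_const (θ : ℂ)).mul_const
            Complex.I
        exact (h1.cexp).const_mul _)
      (fun s => by
        rw [← mul_assoc, norm_mul, hn, norm_mul, Complex.norm_I, mul_one, Complex.norm_real,
          Real.norm_eq_abs]
        have := Complex.abs_arg_le_pi (w / (ρ * ω))
        have h3 : ρ ≤ 1 := by linarith [hρ.2]
        exact (mul_le_of_le_one_left (abs_nonneg _) h3).trans this)
      (fun s _ => hballs _ (hn s).le)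
      (fun s _ a ha haF => by
        have h1 := hρZ _ (mem_image_of_mem _ ⟨ha, haF⟩)
        rw [Real.dist_eq] at h1
        rw [dist_eq_norm]
        have h2 := abs_norm_sub_norm_le a (ρ * ω * Complex.exp (s * θ * Complex.I))
        rw [hn] at h2
        linarith) 1 ⟨zero_le_one, le_rfl⟩
    simp only [Complex.ofReal_one, one_mul, hw', Complex.ofReal_zero, zero_mul, Complex.exp_zero,
      mul_one] at h
    exact h.trans (by gcongr)
  have hdc : DiffContOnCl ℂ F (ball 0 ρ) := by
    refine (hF.mono ?_).diffContOnCl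
    rw [closure_ball _ hρ0.ne']
    exact closedBall_subset_ball (by linarith [hρ.2])
  refine Complex.norm_le_of_forall_mem_frontier_norm_le isBounded_ball hdc (fun w hw => ?_) (z := z)
    ?_
  · rw [frontier_ball _ hρ0.ne'] at hw
    have h1 := hcirc w hw
    have h2 := norm_sub_norm_le (F w) (t₀ * Complex.I)
    rw [hnt] at h2
    linarith [ht₀.2]
  · rw [closure_ball _ hρ0.ne']
    exact closedBall_subset_closedBall hρ.1.le hz

theorem HasFewImaginaryValues.mul_add {p : ℕ} {F : ℂ → ℂ} (h : HasFewImaginaryValues p F) {c : ℝ}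
    (hc : c ≠ 0) (b : ℝ) : HasFewImaginaryValues p (fun z => c * F z + b * Complex.I) := by
  obtain ⟨T, hT, hcard⟩ := h
  refine ⟨{t | (t - b) / c ∈ T}, hT.preimage_of_injOn fun x _ y _ hxy => by
    simpa [div_left_inj' hc] using hxy, fun t ht => ?_⟩
  refine (encard_le_encard ?_).trans (hcard _ ht)
  rintro z ⟨hz, hzt⟩
  refine ⟨hz, ?_⟩
  have hc' : (c : ℂ) ≠ 0 := by exact_mod_cast hc
  push_cast
  field_simp
  linear_combination hzt

theorem hasFewImaginaryValues_of_components {F : ℂ → ℂ} (hF : AnalyticOnNhd ℂ F (ball 0 1))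
    (hne : ∃ z ∈ ball (0 : ℂ) 1, (F z).re ≠ 0) {N : ℕ}
    (hN : {C | ∃ x ∈ ball (0 : ℂ) 1 \ {w | (F w).re = 0},
      C = connectedComponentIn (ball (0 : ℂ) 1 \ {w | (F w).re = 0}) x}.encard ≤ N) :
    HasFewImaginaryValues (N * N) F := by
  by_cases hnc : ∀ z ∈ ball (0 : ℂ) 1, ¬ ∀ᶠ w in 𝓝 z, F w = F z
  · set D := {z ∈ ball (0 : ℂ) 1 | deriv F z = 0} with hD
    have hDc : D.Countable := by
      obtain ⟨t, -, htc, hcov⟩ := TopologicalSpace.countable_cover_nhdsWithin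
        (s := D) (f := fun z => {z}) fun z hz => by
          rcases (hF.deriv z hz.1).eventually_eq_zero_or_eventually_ne_zero with h | h
          · exfalso
            obtain ⟨ε, hε, hball⟩ := Metric.eventually_nhds_iff_ball.mp
              (h.and (isOpen_ball.mem_nhds hz.1))
            refine hnc z hz.1 ?_
            filter_upwards [ball_mem_nhds z hε] with w hw
            exact (isOpen_ball (x := z) (ε := ε)).is_const_of_deriv_eq_zero
              (convex_ball z ε).isPreconnected
              (fun w hw => (hF w (hball w hw).2).differentiableAt.differentiableWithinAt)
              (fun w hw => (hball w hw).1) hw (mem_ball_self hε)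
          · rw [eventually_nhdsWithin_iff] at h
            rw [mem_nhdsWithin_iff_eventually]
            filter_upwards [h] with w hw hwD
            by_contra hne
            exact hw hne hwD.2
      exact htc.mono (by simpa using hcov)
    refine ⟨(fun z => (F z).im) '' D, hDc.image _, fun t ht => ?_⟩
    have h := encard_zeros_le (F := fun z => F z - t * Complex.I) (N := N)
      (hF.sub analyticOnNhd_const)
      (fun z hz h => hnc z hz (by simpa using h)) (fun z hz hz0 hd => ht ⟨z, ⟨hz, by
        rwa [deriv_sub_const] at hd⟩, by
        simp [sub_eq_zero.mp hz0]⟩) (by simpa using hN)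
    simpa [sub_eq_zero] using h
  · push Not at hnc
    obtain ⟨z, hz, hev⟩ := hnc
    obtain ⟨y, hy, hy0⟩ := hne
    have hconst := hF.eqOn_of_preconnected_of_eventuallyEq (analyticOnNhd_const (v := F z))
      (convex_ball 0 1).isPreconnected hz hev
    refine ⟨∅, countable_empty, fun t _ => ?_⟩
    have : {w ∈ ball (0 : ℂ) 1 | F w = t * Complex.I} = ∅ := by
      rw [eq_empty_iff_forall_notMem]
      rintro w ⟨hw, hwt⟩
      rw [hconst hw, ← hconst hy] at hwt
      apply hy0
      rw [hwt]; simp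
    rw [this, encard_empty]
    exact zero_le

theorem exists_bound_of_re_bound (p : ℕ) {R : ℝ} (hR0 : 0 < R) (hR : R < 1) :
    ∃ A : ℝ, ∀ F : ℂ → ℂ, DifferentiableOn ℂ F (ball 0 1) → HasFewImaginaryValues p F →
      (F 0).im = 0 → (∀ z ∈ closedBall (0 : ℂ) (1 / 2), |(F z).re| ≤ 1) →
      ∀ z ∈ closedBall (0 : ℂ) R, ‖F z‖ ≤ A := by
  obtain ⟨A, hA⟩ := exists_growth_bound p (show (0 : ℝ) < 1 / 4 by norm_num) hR0 hR
  refine ⟨8 * A, fun F hF hp h0 hre z hz => ?_⟩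
  have hbc : ∀ w ∈ ball (0 : ℂ) (1 / 4), ‖F w‖ ≤ 8 := by
    intro w hw
    rw [mem_ball_zero_iff] at hw
    have h1 := Complex.borelCaratheodory (f := F) (M := 1) (R := 1 / 2) one_pos
      (hF.mono (ball_subset_ball (by norm_num)))
      (fun y hy => (abs_le.mp (hre y (ball_subset_closedBall hy))).2) (by norm_num)
      (z := w) (by rw [mem_ball_zero_iff]; linarith)
    have h2 : ‖F 0‖ ≤ 1 := by
      have h3 := hre 0 (by simp)
      rwa [← Complex.re_add_im (F 0), h0, Complex.ofReal_zero, zero_mul, add_zero,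
        Complex.norm_real]
    have h4 : 0 < 1 / 2 - ‖w‖ := by linarith
    refine h1.trans ?_
    rw [← add_div, div_le_iff₀ h4]
    nlinarith [norm_nonneg w]
  have h1 := hA (fun z => ((1 / 8 : ℝ) : ℂ) * F z + (0 : ℝ) * Complex.I)
    ((hF.const_mul _).add_const _) (hp.mul_add (by norm_num) 0) (fun w _ hw => by
      have := hbc w (by simpa using hw)
      simp only [Complex.ofReal_zero, zero_mul, add_zero, norm_mul, Complex.norm_real]
      norm_num
      linarith) z hz
  simp only [Complex.ofReal_zero, zero_mul, add_zero, norm_mul, Complex.norm_real] at h1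
  norm_num at h1
  linarith

/-- **Montel's theorem** along an ultrafilter. -/
theorem exists_limit_of_locally_bounded {F : ℕ → ℂ → ℂ} (𝒰 : Ultrafilter ℕ)
    (hF : ∀ k, DifferentiableOn ℂ (F k) (ball 0 1))
    (hbd : ∀ R : ℝ, 0 < R → R < 1 → ∃ A : ℝ, ∀ k, ∀ z ∈ closedBall (0 : ℂ) R, ‖F k z‖ ≤ A) :
    ∃ G : ℂ → ℂ, DifferentiableOn ℂ G (ball 0 1) ∧
      ∀ R : ℝ, 0 < R → R < 1 → TendstoUniformlyOn F G 𝒰 (closedBall 0 R) := by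
  have hlim : ∀ z : ℂ, ∃ y : ℂ, z ∈ ball (0 : ℂ) 1 → Tendsto (fun k => F k z) 𝒰 (𝓝 y) := by
    intro z
    by_cases hz : z ∈ ball (0 : ℂ) 1
    · rw [mem_ball_zero_iff] at hz
      obtain ⟨A, hA⟩ := hbd ((‖z‖ + 1) / 2) (by positivity) (by linarith)
      obtain ⟨y, -, hy⟩ := (isCompact_closedBall (0 : ℂ) A).ultrafilter_le_nhds
        (𝒰.map fun k => F k z) (by
          rw [Ultrafilter.coe_map, le_principal_iff, mem_map]
          exact univ_mem' fun k => mem_closedBall_zero_iff.mpr (hA k z (by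
            rw [mem_closedBall_zero_iff]; linarith)))
      exact ⟨y, fun _ => hy⟩
    · exact ⟨0, fun h => absurd h hz⟩
  choose G hG using hlim
  have hunif : ∀ R : ℝ, 0 < R → R < 1 → TendstoUniformlyOn F G 𝒰 (closedBall 0 R) := by
    intro R hR0 hR
    obtain ⟨A, hA⟩ := hbd ((R + 1) / 2) (by positivity) (by linarith)
    have hA0 : 0 ≤ A := (norm_nonneg _).trans (hA 0 0 (by simp; positivity))
    set d := (1 - R) / 2 with hd
    have hd0 : 0 < d := by rw [hd]; linarith
    have hsub1 : closedBall (0 : ℂ) R ⊆ ball 0 1 := closedBall_subset_ball hR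
    have hlip : ∀ k, ∀ z ∈ closedBall (0 : ℂ) R, ∀ w ∈ closedBall (0 : ℂ) R,
        ‖F k z - F k w‖ ≤ 2 * A / d * ‖z - w‖ := by
      intro k z hz w hw
      refine (convex_closedBall (0 : ℂ) R).norm_image_sub_le_of_norm_deriv_le
        (fun x hx => (hF k).differentiableAt (isOpen_ball.mem_nhds (hsub1 hx)))
        (fun x hx => ?_) hw hz
      have hsub : ball x d ⊆ closedBall 0 ((R + 1) / 2) := by
        refine ball_subset_closedBall.trans (closedBall_subset_closedBall' ?_)
        rw [mem_closedBall] at hx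
        linarith
      refine Complex.norm_deriv_le_div_of_mapsTo_ball ((hF k).mono (hsub.trans
        (closedBall_subset_ball (by linarith)))) (fun y hy => ?_) hd0
      rw [mem_closedBall, dist_eq_norm]
      refine (norm_sub_le _ _).trans ?_
      linarith [hA k y (hsub hy), hA k x (hsub (mem_ball_self hd0))]
    have hlipG : ∀ z ∈ closedBall (0 : ℂ) R, ∀ w ∈ closedBall (0 : ℂ) R,
        ‖G z - G w‖ ≤ 2 * A / d * ‖z - w‖ := fun z hz w hw =>
      le_of_tendsto ((hG z (hsub1 hz)).sub (hG w (hsub1 hw))).norm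
        (Eventually.of_forall fun k => hlip k z hz w hw)
    rw [Metric.tendstoUniformlyOn_iff]
    intro ε hε
    set L := 2 * A / d with hL
    have hL0 : 0 ≤ L := by positivity
    obtain ⟨δ, hδ, hLδ⟩ : ∃ δ > 0, L * δ ≤ ε / 4 :=
      ⟨ε / (4 * (L + 1)), by positivity, by
        rw [mul_div_assoc', div_le_iff₀ (by positivity)]; nlinarith⟩
    obtain ⟨t, htK, htf, hcov⟩ := Metric.finite_approx_of_totallyBounded
      (isCompact_closedBall (0 : ℂ) R).totallyBounded δ hδ
    have hev : ∀ᶠ k in (𝒰 : Filter ℕ), ∀ x ∈ t, dist (F k x) (G x) < ε / 4 :=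
      (eventually_all_finite htf).mpr fun x hx =>
        (Metric.tendsto_nhds.mp (hG x (hsub1 (htK hx)))) (ε / 4) (by positivity)
    filter_upwards [hev] with k hk z hz
    obtain ⟨x, hxt, hx⟩ := mem_iUnion₂.mp (hcov hz)
    rw [mem_ball, dist_eq_norm] at hx
    have h1 := hlipG z hz x (htK hxt)
    have h2 := hlip k z hz x (htK hxt)
    have h3 := hk x hxt
    have h4 : L * ‖z - x‖ ≤ ε / 4 := (mul_le_mul_of_nonneg_left hx.le hL0).trans hLδ
    rw [dist_eq_norm] at h3 ⊢
    have e : G z - F k z = (G z - G x) - (F k x - G x) - (F k z - F k x) := by ring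
    rw [e]
    have h5 := norm_sub_le ((G z - G x) - (F k x - G x)) (F k z - F k x)
    have h6 := norm_sub_le (G z - G x) (F k x - G x)
    linarith
  refine ⟨G, fun z hz => ?_, hunif⟩
  have hz1 : ‖z‖ < 1 := mem_ball_zero_iff.mp hz
  have hR0 : 0 < (‖z‖ + 1) / 2 := by positivity
  have hR1 : (‖z‖ + 1) / 2 < 1 := by linarith
  have hloc := ((hunif _ hR0 hR1).mono ball_subset_closedBall).tendstoLocallyUniformlyOn
  have := hloc.differentiableOn (Eventually.of_forall fun k =>
    (hF k).mono (ball_subset_ball hR1.le)) isOpen_ball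
  exact (this.differentiableAt (isOpen_ball.mem_nhds (by
    rw [mem_ball_zero_iff]; linarith))).differentiableWithinAt

/-- Holomorphic dependence of a circle integral on a parameter. -/
theorem differentiableOn_circleIntegral {f : ℂ → ℂ → ℂ} {s : Set ℂ} (hs : IsOpen s) {M : ℝ}
    (hd : ∀ ξ ∈ sphere (0 : ℂ) 1, DifferentiableOn ℂ (fun w => f w ξ) s)
    (hc : ∀ w ∈ s, ContinuousOn (f w) (sphere 0 1))
    (hM : ∀ w ∈ s, ∀ ξ ∈ sphere (0 : ℂ) 1, ‖f w ξ‖ ≤ M) :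
    DifferentiableOn ℂ (fun w => ∮ ξ in C(0, 1), f w ξ) s := by
  intro w₀ hw₀
  obtain ⟨r, hr, hrs⟩ := Metric.isOpen_iff.mp hs w₀ hw₀
  have hmem : ∀ θ : ℝ, circleMap 0 1 θ ∈ sphere (0 : ℂ) 1 :=
    fun θ => circleMap_mem_sphere 0 zero_le_one θ
  have hcont : ∀ w ∈ s, Continuous fun θ : ℝ =>
      deriv (circleMap 0 1) θ • f w (circleMap 0 1 θ) := by
    intro w hw
    have h1 : Continuous fun θ : ℝ => deriv (circleMap 0 1) θ := by
      simp only [deriv_circleMap]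
      fun_prop
    exact h1.smul ((hc w hw).comp_continuous (continuous_circleMap 0 1) hmem)
  have hder : ∀ θ : ℝ, ∀ w ∈ s, HasDerivAt (fun w => deriv (circleMap 0 1) θ •
      f w (circleMap 0 1 θ)) (deriv (circleMap 0 1) θ •
      deriv (fun w => f w (circleMap 0 1 θ)) w) w := fun θ w hw =>
    (((hd _ (hmem θ)).differentiableAt (hs.mem_nhds hw)).hasDerivAt).const_mul
      (deriv (circleMap 0 1) θ)
  have hF'_meas : MeasureTheory.AEStronglyMeasurable (fun θ : ℝ => deriv (circleMap 0 1) θ •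
      deriv (fun w => f w (circleMap 0 1 θ)) w₀)
      (MeasureTheory.volume.restrict (Set.uIoc 0 (2 * Real.pi))) := by
    refine MeasureTheory.AEStronglyMeasurable.mono_measure ?_ MeasureTheory.Measure.restrict_le_self
    set h : ℕ → ℂ := fun n => (r / 2 : ℝ) / ((n : ℂ) + 1) with hh
    have hns : ∀ n, ‖h n‖ ≤ r / 2 := by
      intro n
      have e : ‖(n : ℂ) + 1‖ = (n : ℝ) + 1 := by
        have : ((n : ℂ) + 1) = ((n + 1 : ℕ) : ℂ) := by push_cast; rfl
        rw [this, Complex.norm_natCast]; push_cast; rfl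
      rw [hh]
      simp only [norm_div, e, Complex.norm_real, Real.norm_eq_abs]
      rw [abs_of_pos hr, abs_of_pos two_pos]
      exact div_le_self (half_pos hr).le (by linarith [Nat.cast_nonneg (α := ℝ) n])
    have hn0 : ∀ n, h n ≠ 0 := fun n =>
      div_ne_zero (by exact_mod_cast (by positivity : (r / 2 : ℝ) ≠ 0)) (Nat.cast_add_one_ne_zero n)
    have hlim : Tendsto h atTop (𝓝[≠] 0) := by
      refine tendsto_nhdsWithin_iff.mpr ⟨?_, Eventually.of_forall hn0⟩
      have := (tendsto_one_div_add_atTop_nhds_zero_nat (𝕜 := ℂ)).const_mul ((r / 2 : ℝ) : ℂ)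
      rw [mul_zero] at this
      exact this.congr fun n => by rw [hh, mul_one_div]
    refine aestronglyMeasurable_of_tendsto_ae (u := atTop) (f := fun n (θ : ℝ) =>
      (h n)⁻¹ • (deriv (circleMap 0 1) θ • f (w₀ + h n) (circleMap 0 1 θ) -
        deriv (circleMap 0 1) θ • f w₀ (circleMap 0 1 θ))) ?_ ?_
    · intro n
      refine Continuous.aestronglyMeasurable
        (continuous_const.mul ((hcont _ (hrs ?_)).sub (hcont _ hw₀)))
      rw [mem_ball_iff_norm, add_sub_cancel_left]
      linarith [hns n]
    · exact Eventually.of_forall fun θ => (hder θ w₀ hw₀).tendsto_slope_zero.comp hlim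
  refine DifferentiableAt.differentiableWithinAt ?_
  have hball : ball w₀ (r / 2) ⊆ s := (ball_subset_ball (by linarith)).trans hrs
  refine (intervalIntegral.hasDerivAt_integral_of_dominated_loc_of_deriv_le
    (bound := fun _ => 2 * M / (r / 2))
    (F := fun w θ => deriv (circleMap 0 1) θ • f w (circleMap 0 1 θ))
    (F' := fun w θ => deriv (circleMap 0 1) θ • deriv (fun w => f w (circleMap 0 1 θ)) w)
    (ball_mem_nhds w₀ (half_pos hr)) ?_ ((hcont w₀ hw₀).intervalIntegrable _ _) hF'_meas
    ?_ intervalIntegrable_const ?_).2.differentiableAt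
  · filter_upwards [hs.mem_nhds hw₀] with w hw using (hcont w hw).aestronglyMeasurable
  · refine Eventually.of_forall fun θ _ w hw => ?_
    have hsub : ball w (r / 2) ⊆ s := by
      refine (ball_subset_ball' ?_).trans hrs
      rw [mem_ball] at hw
      linarith
    have h1 : ‖deriv (fun w => f w (circleMap 0 1 θ)) w‖ ≤ 2 * M / (r / 2) := by
      refine Complex.norm_deriv_le_div_of_mapsTo_ball ((hd _ (hmem θ)).mono hsub)
        (fun y hy => ?_) (half_pos hr)
      rw [mem_closedBall, dist_eq_norm]
      refine (norm_sub_le _ _).trans ?_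
      linarith [hM y (hsub hy) _ (hmem θ), hM w (hball hw) _ (hmem θ)]
    simpa [deriv_circleMap, norm_smul] using h1
  · exact Eventually.of_forall fun θ _ w hw => hder θ w (hball hw)

/-- Division of holomorphic functions when the divisor has only simple zeros. -/
theorem exists_differentiableOn_mul_eq {u v : ℂ → ℂ} (hu : DifferentiableOn ℂ u (ball 0 2))
    (hv : DifferentiableOn ℂ v (ball 0 2))
    (hz : ∀ x ∈ closedBall (0 : ℂ) 1, v x = 0 → deriv v x ≠ 0 ∧ u x = 0) :
    ∃ Q : ℂ → ℂ, DifferentiableOn ℂ Q (closedBall 0 1) ∧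
      (∀ x, v x ≠ 0 → Q x = u x / v x) ∧ ∀ x ∈ closedBall (0 : ℂ) 1, Q x * v x = u x := by
  classical
  refine ⟨fun x => if v x = 0 then deriv u x / deriv v x else u x / v x, ?_,
    fun x hx => if_neg hx, fun x hx => ?_⟩
  · intro x₀ hx₀
    refine DifferentiableAt.differentiableWithinAt ?_
    have hnhds : ball (0 : ℂ) 2 ∈ 𝓝 x₀ := isOpen_ball.mem_nhds
      (closedBall_subset_ball (by norm_num) hx₀)
    by_cases h0 : v x₀ = 0
    · obtain ⟨h1, h2⟩ := hz x₀ hx₀ h0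
      have du := ((Complex.differentiableOn_dslope hnhds).mpr hu).differentiableAt hnhds
      have dv := ((Complex.differentiableOn_dslope hnhds).mpr hv).differentiableAt hnhds
      have h3 : dslope v x₀ x₀ ≠ 0 := by rwa [dslope_same]
      refine (du.div dv h3).congr_of_eventuallyEq ?_
      filter_upwards [dv.continuousAt.eventually_ne h3] with x hx
      by_cases hxx : x = x₀
      · subst hxx
        simp [h0]
      · have e1 := sub_smul_dslope v x₀ x
        have e2 := sub_smul_dslope u x₀ x
        rw [h0, sub_zero, smul_eq_mul] at e1
        rw [h2, sub_zero, smul_eq_mul] at e2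
        have hne : x - x₀ ≠ 0 := sub_ne_zero.mpr hxx
        have : v x ≠ 0 := by rw [← e1]; exact mul_ne_zero hne hx
        simp only [this, if_false, Pi.div_apply]
        rw [← e1, ← e2, mul_div_mul_left _ _ hne]
    · have dv := hv.differentiableAt hnhds
      refine ((hu.differentiableAt hnhds).div dv h0).congr_of_eventuallyEq ?_
      filter_upwards [dv.continuousAt.eventually_ne h0] with x hx
      simp [hx]
  · by_cases h0 : v x = 0
    · simp [h0, (hz x hx h0).2]
    · simp [h0]

/-- Division with a holomorphic parameter: if `V (·, y)` has only simple zeros, at which `U (·, y)`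
vanishes, for `y` in some real interval, then `U / V` extends holomorphically, with bounds depending
only on those of `U` and of `1 / V` on a torus. -/
theorem exists_quotient_of_simple_zeros {δ a b M : ℝ} (ha : 0 ≤ a) (hab : a < b) (hb : b < δ)
    {U V : ℂ → ℂ → ℂ}
    (hU1 : ∀ y ∈ ball (0 : ℂ) δ, DifferentiableOn ℂ (fun x => U x y) (ball 0 2))
    (hV1 : ∀ y ∈ ball (0 : ℂ) δ, DifferentiableOn ℂ (fun x => V x y) (ball 0 2))
    (hU2 : ∀ x ∈ ball (0 : ℂ) 2, DifferentiableOn ℂ (U x) (ball 0 δ))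
    (hV2 : ∀ x ∈ ball (0 : ℂ) 2, DifferentiableOn ℂ (V x) (ball 0 δ))
    (hUM : ∀ x ∈ sphere (0 : ℂ) 1, ∀ y ∈ ball (0 : ℂ) δ, ‖U x y‖ ≤ M)
    (hVM : ∀ x ∈ sphere (0 : ℂ) 1, ∀ y ∈ ball (0 : ℂ) δ, 1 / 4 ≤ ‖V x y‖)
    (hz : ∀ y : ℝ, a < y → y < b → ∀ x ∈ closedBall (0 : ℂ) 1, V x y = 0 →
      deriv (fun x => V x y) x ≠ 0 ∧ U x y = 0) :
    ∃ Φ : ℂ → ℂ → ℂ,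
      (∀ x ∈ ball (0 : ℂ) (1 / 2), ∀ y ∈ ball (0 : ℂ) δ,
        Φ x y * V x y = U x y ∧ ‖Φ x y‖ ≤ 8 * M) ∧
      ∀ x ∈ ball (0 : ℂ) (1 / 2), ∀ x' ∈ ball (0 : ℂ) (1 / 2), ∀ y' ∈ ball (0 : ℂ) (δ / 2),
        ∀ y ∈ ball y' (δ / 2),
        ‖Φ x y - Φ x' y'‖ ≤ 16 * M * ‖x - x'‖ + 32 * M / δ * ‖y - y'‖ := by
  have hδ : 0 < δ := by linarith
  have hs2 : ∀ ξ ∈ sphere (0 : ℂ) 1, ξ ∈ ball (0 : ℂ) 2 := fun ξ hξ =>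
    closedBall_subset_ball (by norm_num) (sphere_subset_closedBall hξ)
  have hV0 : ∀ x ∈ sphere (0 : ℂ) 1, ∀ y ∈ ball (0 : ℂ) δ, V x y ≠ 0 := fun x hx y hy h => by
    have := hVM x hx y hy
    rw [h, norm_zero] at this
    norm_num at this
  have hM0 : 0 ≤ M := (norm_nonneg _).trans (hUM 1 (by simp) 0 (mem_ball_self hδ))
  have hq : ∀ x ∈ sphere (0 : ℂ) 1, ∀ y ∈ ball (0 : ℂ) δ, ‖U x y / V x y‖ ≤ 4 * M := by
    intro x hx y hy
    rw [norm_div, div_le_iff₀ (by linarith [hVM x hx y hy])]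
    nlinarith [hVM x hx y hy, hUM x hx y hy]
  have hfar : ∀ ξ ∈ sphere (0 : ℂ) 1, ∀ x ∈ ball (0 : ℂ) (1 / 2), 1 / 2 ≤ ‖ξ - x‖ := by
    intro ξ hξ x hx
    rw [mem_sphere_zero_iff_norm] at hξ
    rw [mem_ball_zero_iff] at hx
    linarith [norm_sub_norm_le ξ x]
  have hinv : ∀ ξ ∈ sphere (0 : ℂ) 1, ∀ x ∈ ball (0 : ℂ) (1 / 2), ‖(ξ - x)⁻¹‖ ≤ 2 := by
    intro ξ hξ x hx
    rw [norm_inv]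
    exact inv_le_of_inv_le₀ two_pos (by linarith [hfar ξ hξ x hx])
  have hfc : ∀ x ∈ ball (0 : ℂ) (1 / 2), ∀ y ∈ ball (0 : ℂ) δ,
      ContinuousOn (fun ξ => (ξ - x)⁻¹ • (U ξ y / V ξ y)) (sphere 0 1) := by
    intro x hx y hy
    refine ContinuousOn.smul (ContinuousOn.inv₀ (continuousOn_id.sub continuousOn_const)
      fun ξ hξ (h : ξ - x = 0) => ?_)
      (((hU1 y hy).continuousOn.mono hs2).div ((hV1 y hy).continuousOn.mono hs2)
        fun ξ hξ => hV0 ξ hξ y hy)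
    have := hfar ξ hξ x hx
    rw [h, norm_zero] at this
    norm_num at this
  set Φ : ℂ → ℂ → ℂ := fun x y =>
    (2 * Real.pi * Complex.I : ℂ)⁻¹ • ∮ ξ in C(0, 1), (ξ - x)⁻¹ • (U ξ y / V ξ y) with hΦ
  have hbd : ∀ x ∈ ball (0 : ℂ) (1 / 2), ∀ y ∈ ball (0 : ℂ) δ, ∀ ξ ∈ sphere (0 : ℂ) 1,
      ‖(ξ - x)⁻¹ • (U ξ y / V ξ y)‖ ≤ 8 * M := by
    intro x hx y hy ξ hξ
    rw [norm_smul]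
    nlinarith [hinv ξ hξ x hx, hq ξ hξ y hy, norm_nonneg (ξ - x)⁻¹, norm_nonneg (U ξ y / V ξ y)]
  have hqd : ∀ ξ ∈ sphere (0 : ℂ) 1, DifferentiableOn ℂ (fun y => U ξ y / V ξ y) (ball 0 δ) :=
    fun ξ hξ => (hU2 ξ (hs2 ξ hξ)).div (hV2 ξ (hs2 ξ hξ)) (hV0 ξ hξ)
  refine ⟨Φ, fun x hx y hy => ⟨?_, ?_⟩, fun x hx x' hx' y' hy' y hy => ?_⟩
  · have hx2 : x ∈ ball (0 : ℂ) 2 := ball_subset_ball (by norm_num) hx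
    have hΦd : DifferentiableOn ℂ (Φ x) (ball 0 δ) :=
      (differentiableOn_circleIntegral isOpen_ball
        (f := fun y ξ => (ξ - x)⁻¹ • (U ξ y / V ξ y))
        (fun ξ hξ => (hqd ξ hξ).const_mul (ξ - x)⁻¹)
        (hfc x hx) (hbd x hx)).const_mul (2 * Real.pi * Complex.I : ℂ)⁻¹
    have han : AnalyticOnNhd ℂ (fun y => Φ x y * V x y - U x y) (ball 0 δ) :=
      ((hΦd.mul (hV2 x hx2)).sub (hU2 x hx2)).analyticOnNhd isOpen_ball
    have hreal : ∀ t : ℝ, a < t → t < b → Φ x t * V x t - U x t = 0 := by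
      intro t hta htb
      have ht : (t : ℂ) ∈ ball (0 : ℂ) δ := by
        rw [mem_ball_zero_iff, Complex.norm_real, Real.norm_eq_abs, abs_of_pos (by linarith)]
        linarith
      obtain ⟨Q, hQ, hQe, hQm⟩ := exists_differentiableOn_mul_eq (hU1 t ht) (hV1 t ht)
        (hz t hta htb)
      have e : Φ x t = Q x := by
        have h1 : (∮ ξ in C(0, 1), (ξ - x)⁻¹ • (U ξ t / V ξ t)) =
            ∮ ξ in C(0, 1), (ξ - x)⁻¹ • Q ξ :=
          circleIntegral.integral_congr zero_le_one fun ξ hξ => by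
            simp only [hQe ξ (hV0 ξ hξ t ht)]
        rw [hΦ]
        simp only [h1]
        rw [hQ.circleIntegral_sub_inv_smul (ball_subset_ball (by norm_num) hx), inv_smul_smul₀]
        simp [Real.pi_ne_zero]
      rw [e, hQm x (ball_subset_closedBall (ball_subset_ball (by norm_num) hx)), sub_self]
    set c : ℝ := (a + b) / 2 with hcdef
    have hcmem : (c : ℂ) ∈ ball (0 : ℂ) δ := by
      rw [mem_ball_zero_iff, Complex.norm_real, Real.norm_eq_abs, abs_of_pos (by linarith)]
      linarith
    have hfreq : ∃ᶠ z in 𝓝[≠] (c : ℂ), Φ x z * V x z - U x z = 0 := by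
      have ht : Tendsto (fun t : ℝ => (t : ℂ)) (𝓝[≠] c) (𝓝[≠] (c : ℂ)) := by
        refine tendsto_nhdsWithin_iff.mpr
          ⟨Complex.continuous_ofReal.continuousAt.tendsto.mono_left nhdsWithin_le_nhds, ?_⟩
        filter_upwards [self_mem_nhdsWithin] with t ht
        exact fun h => ht (Complex.ofReal_injective h)
      refine ht.frequently (Eventually.frequently ?_)
      filter_upwards [nhdsWithin_le_nhds (Ioo_mem_nhds (a := a) (b := b) (x := c)
        (by linarith) (by linarith))] with t ht
      exact hreal t ht.1 ht.2
    have := han.eqOn_zero_of_preconnected_of_frequently_eq_zero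
      (convex_ball (0 : ℂ) δ).isPreconnected hcmem hfreq hy
    exact sub_eq_zero.mp this
  · exact (circleIntegral.norm_two_pi_i_inv_smul_integral_le_of_norm_le_const
      zero_le_one (hbd x hx y hy)).trans_eq (one_mul _)
  · have hy'δ : y' ∈ ball (0 : ℂ) δ := ball_subset_ball (by linarith) hy'
    have hsub : ball y' (δ / 2) ⊆ ball 0 δ := by
      refine ball_subset_ball' ?_
      rw [mem_ball] at hy'
      linarith
    rw [hΦ]
    simp only
    rw [← smul_sub, ← circleIntegral.integral_sub
      ((hfc x hx y (hsub hy)).circleIntegrable zero_le_one)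
      ((hfc x' hx' y' hy'δ).circleIntegrable zero_le_one)]
    refine (circleIntegral.norm_two_pi_i_inv_smul_integral_le_of_norm_le_const
      zero_le_one (C := 16 * M * ‖x - x'‖ + 32 * M / δ * ‖y - y'‖) fun ξ hξ => ?_).trans
      (one_mul _).le
    have hne : ∀ x ∈ ball (0 : ℂ) (1 / 2), ξ - x ≠ 0 := fun x hx h => by
      have := hfar ξ hξ x hx
      rw [h, norm_zero] at this
      norm_num at this
    have e : (ξ - x)⁻¹ • (U ξ y / V ξ y) - (ξ - x')⁻¹ • (U ξ y' / V ξ y') =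
        (x - x') * ((ξ - x)⁻¹ * (ξ - x')⁻¹) * (U ξ y' / V ξ y') +
        (ξ - x)⁻¹ * (U ξ y / V ξ y - U ξ y' / V ξ y') := by
      have h1 := hne x hx
      have h2 := hne x' hx'
      have h3 : (x - x') * ((ξ - x)⁻¹ * (ξ - x')⁻¹) = (ξ - x)⁻¹ - (ξ - x')⁻¹ := by
        field_simp
        ring
      rw [h3, smul_eq_mul, smul_eq_mul]
      ring
    have hlip : ‖U ξ y / V ξ y - U ξ y' / V ξ y'‖ ≤ 16 * M / δ * ‖y - y'‖ := by
      have := Complex.dist_le_div_mul_dist_of_mapsTo_ball (R₂ := 8 * M) ((hqd ξ hξ).mono hsub)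
        (fun w hw => by
          rw [mem_closedBall, dist_eq_norm]
          refine (norm_sub_le _ _).trans ?_
          linarith [hq ξ hξ w (hsub hw), hq ξ hξ y' hy'δ]) hy
      rw [dist_eq_norm, dist_eq_norm] at this
      refine this.trans_eq ?_
      field_simp
      ring
    rw [e]
    refine (norm_add_le _ _).trans (add_le_add ?_ ?_)
    · rw [norm_mul, norm_mul, norm_mul]
      have h4 : ‖(ξ - x)⁻¹‖ * ‖(ξ - x')⁻¹‖ ≤ 4 := by
        nlinarith [hinv ξ hξ x hx, hinv ξ hξ x' hx', norm_nonneg (ξ - x)⁻¹,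
          norm_nonneg (ξ - x')⁻¹]
      calc ‖x - x'‖ * (‖(ξ - x)⁻¹‖ * ‖(ξ - x')⁻¹‖) * ‖U ξ y' / V ξ y'‖
          ≤ ‖x - x'‖ * 4 * (4 * M) := by
            gcongr
            exact hq ξ hξ y' hy'δ
        _ = 16 * M * ‖x - x'‖ := by ring
    · rw [norm_mul]
      calc ‖(ξ - x)⁻¹‖ * ‖U ξ y / V ξ y - U ξ y' / V ξ y'‖
          ≤ 2 * (16 * M / δ * ‖y - y'‖) := by
            gcongr
            exact hinv ξ hξ x hx
        _ = 32 * M / δ * ‖y - y'‖ := by ring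

/-- The holomorphic extension of `(x, y) ↦ Re (G (x + i y))` to complex `x` and `y`. -/
def complexifiedRe (G : ℂ → ℂ) (x y : ℂ) : ℂ :=
  (G (x + Complex.I * y) + conj (G (conj x + Complex.I * conj y))) / 2

theorem norm_add_I_mul_lt {x y : ℂ} (hx : x ∈ ball (0 : ℂ) 2) (hy : y ∈ ball (0 : ℂ) 1) :
    x + Complex.I * y ∈ ball (0 : ℂ) 4 := by
  rw [mem_ball_zero_iff] at *
  refine (norm_add_le _ _).trans_lt ?_
  rw [norm_mul, Complex.norm_I, one_mul]
  linarith

theorem conj_mem_ball {x : ℂ} {r : ℝ} (hx : x ∈ ball (0 : ℂ) r) : conj x ∈ ball (0 : ℂ) r := by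
  rw [mem_ball_zero_iff] at *
  rwa [Complex.norm_conj]

theorem complexifiedRe_ofReal (G : ℂ → ℂ) (x y : ℝ) :
    complexifiedRe G x y = ((G (x + Complex.I * y)).re : ℂ) := by
  rw [complexifiedRe, Complex.conj_ofReal, Complex.conj_ofReal, Complex.add_conj]
  push_cast
  ring

theorem complexifiedRe_conj (G : ℂ → ℂ) (x : ℂ) (y : ℝ) :
    complexifiedRe G (conj x) y = conj (complexifiedRe G x y) := by
  simp only [complexifiedRe, Complex.conj_ofReal, Complex.conj_conj, map_div₀, map_add]
  rw [add_comm, map_ofNat]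

theorem complexifiedRe_sub (G H : ℂ → ℂ) (x y : ℂ) :
    complexifiedRe (fun z => G z - H z) x y = complexifiedRe G x y - complexifiedRe H x y := by
  simp only [complexifiedRe, map_sub]
  ring

theorem complexifiedRe_pow (m : ℕ) (x y : ℂ) :
    complexifiedRe (fun z => z ^ m) x y =
      ((x + Complex.I * y) ^ m + (x - Complex.I * y) ^ m) / 2 := by
  simp [complexifiedRe, sub_eq_add_neg]

theorem norm_complexifiedRe_le {G : ℂ → ℂ} {M : ℝ} (hG : ∀ z ∈ ball (0 : ℂ) 4, ‖G z‖ ≤ M) {x y : ℂ}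
    (hx : x ∈ ball (0 : ℂ) 2) (hy : y ∈ ball (0 : ℂ) 1) : ‖complexifiedRe G x y‖ ≤ M := by
  have h1 := hG _ (norm_add_I_mul_lt hx hy)
  have h2 := hG _ (norm_add_I_mul_lt (conj_mem_ball hx) (conj_mem_ball hy))
  rw [complexifiedRe, norm_div, Complex.norm_ofNat, div_le_iff₀ two_pos]
  refine (norm_add_le _ _).trans ?_
  rw [Complex.norm_conj]
  linarith

theorem complexifiedRe_eq (G : ℂ → ℂ) (x y : ℂ) : complexifiedRe G x y =
    (G (x + Complex.I * y) + (conj ∘ G ∘ conj) (x - Complex.I * y)) / 2 := by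
  simp [complexifiedRe, sub_eq_add_neg]

theorem sub_I_mul_mem {x y : ℂ} (hx : x ∈ ball (0 : ℂ) 2) (hy : y ∈ ball (0 : ℂ) 1) :
    x - Complex.I * y ∈ ball (0 : ℂ) 4 := by
  have := norm_add_I_mul_lt hx (y := -y) (by simpa using hy)
  rwa [mul_neg, ← sub_eq_add_neg] at this

theorem differentiableOn_conj_conj {G : ℂ → ℂ} {r : ℝ} (hG : DifferentiableOn ℂ G (ball 0 r)) :
    DifferentiableOn ℂ (conj ∘ G ∘ conj) (ball (0 : ℂ) r) := fun _ hz =>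
  (differentiableAt_conj_conj_iff.mpr (hG.differentiableAt
    (isOpen_ball.mem_nhds (conj_mem_ball hz)))).differentiableWithinAt

theorem differentiableOn_complexifiedRe_left {G : ℂ → ℂ} (hG : DifferentiableOn ℂ G (ball 0 4))
    {y : ℂ} (hy : y ∈ ball (0 : ℂ) 1) :
    DifferentiableOn ℂ (fun x => complexifiedRe G x y) (ball 0 2) := by
  simp only [complexifiedRe_eq]
  refine DifferentiableOn.div_const (DifferentiableOn.add
    (hG.comp (f := fun x => x + Complex.I * y) (by fun_prop) fun x hx => norm_add_I_mul_lt hx hy)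
    ((differentiableOn_conj_conj hG).comp (f := fun x => x - Complex.I * y) (by fun_prop)
      fun x hx => sub_I_mul_mem hx hy)) 2

theorem differentiableOn_complexifiedRe_right {G : ℂ → ℂ} (hG : DifferentiableOn ℂ G (ball 0 4))
    {x : ℂ} (hx : x ∈ ball (0 : ℂ) 2) :
    DifferentiableOn ℂ (complexifiedRe G x) (ball 0 1) := by
  have e : complexifiedRe G x = fun y => _ := funext fun y => complexifiedRe_eq G x y
  rw [e]
  refine DifferentiableOn.div_const (DifferentiableOn.add
    (hG.comp (f := fun y => x + Complex.I * y) (by fun_prop) fun y hy => norm_add_I_mul_lt hx hy)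
    ((differentiableOn_conj_conj hG).comp (f := fun y => x - Complex.I * y) (by fun_prop)
      fun y hy => sub_I_mul_mem hx hy)) 2

theorem hasDerivAt_complexifiedRe_pow (m : ℕ) (x y : ℂ) :
    HasDerivAt (fun x => complexifiedRe (fun z => z ^ m) x y)
      ((m * (x + Complex.I * y) ^ (m - 1) + m * (x - Complex.I * y) ^ (m - 1)) / 2) x := by
  simp only [complexifiedRe_pow]
  have h1 := ((hasDerivAt_id x).add_const (Complex.I * y)).pow m
  have h2 := ((hasDerivAt_id x).sub_const (Complex.I * y)).pow m
  simpa using (h1.add h2).div_const 2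

/-- For real `y ≠ 0`, the zeros of `x ↦ Re (x + i y) ^ m` are real and simple. -/
theorem im_eq_zero_of_complexifiedRe_pow_eq_zero {m : ℕ} {x : ℂ} {y : ℝ} (hy : y ≠ 0)
    (h : complexifiedRe (fun z => z ^ m) x y = 0) : x.im = 0 ∧
      (m * (x + Complex.I * y) ^ (m - 1) + m * (x - Complex.I * y) ^ (m - 1)) / 2 ≠ (0 : ℂ) := by
  have hIy : Complex.I * (y : ℂ) ≠ 0 := mul_ne_zero Complex.I_ne_zero (by exact_mod_cast hy)
  rw [complexifiedRe_pow, div_eq_zero_iff, or_iff_left two_ne_zero] at h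
  have hm : m ≠ 0 := by
    rintro rfl
    norm_num at h
  have h1 : (x + Complex.I * y) ^ m = -(x - Complex.I * y) ^ m := eq_neg_of_add_eq_zero_left h
  have hn : ‖x + Complex.I * y‖ = ‖x - Complex.I * y‖ := by
    have := congrArg norm h1
    rw [norm_neg, norm_pow, norm_pow] at this
    exact (pow_left_inj₀ (norm_nonneg _) (norm_nonneg _) hm).mp this
  refine ⟨?_, fun h2 => ?_⟩
  · have h3 := congrArg (· ^ 2) hn
    simp only [Complex.sq_norm, Complex.normSq_apply] at h3
    simp at h3
    have : y * x.im = 0 := by linarith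
    exact (mul_eq_zero.mp this).resolve_left hy
  · rw [div_eq_zero_iff, or_iff_left two_ne_zero, ← mul_add, mul_eq_zero,
      or_iff_right (by exact_mod_cast hm)] at h2
    have h4 : (x + Complex.I * y) ^ (m - 1) = -(x - Complex.I * y) ^ (m - 1) :=
      eq_neg_of_add_eq_zero_left h2
    obtain ⟨k, rfl⟩ := Nat.exists_eq_succ_of_ne_zero hm
    rw [Nat.succ_sub_one] at h4
    rw [pow_succ, pow_succ, h4] at h1
    have h5 : (x - Complex.I * y) ^ k * (2 * (Complex.I * y)) = 0 := by linear_combination -h1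
    rcases mul_eq_zero.mp h5 with h6 | h6
    · have h7 : x - Complex.I * y = 0 := eq_zero_of_pow_eq_zero h6
      rw [h7, norm_zero, norm_eq_zero] at hn
      exact hIy (by linear_combination (hn - h7) / 2)
    · exact (mul_ne_zero two_ne_zero hIy) h6

/-- Stability of the simple real zeros of `x ↦ Re (x + i y) ^ m` under perturbation. -/
theorem exists_complexifiedRe_zeros_real_simple (m : ℕ) {a b : ℝ} (ha : 0 < a) (hb : b < 1) :
    ∃ ε > 0, ε ≤ (1 / 4 : ℝ) ∧ ∀ G : ℂ → ℂ, DifferentiableOn ℂ G (ball 0 4) →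
      (∀ z ∈ ball (0 : ℂ) 4, ‖G z - z ^ m‖ ≤ ε) →
      ∀ y : ℝ, a < y → y < b → ∀ x ∈ closedBall (0 : ℂ) 1, complexifiedRe G x y = 0 →
        x.im = 0 ∧ deriv (fun x => complexifiedRe G x y) x ≠ 0 := by
  have hK : IsCompact (closedBall (0 : ℂ) 1 ×ˢ Icc a b) :=
    (isCompact_closedBall 0 1).prod isCompact_Icc
  have hloc := hK.eventually_forall_of_forall_eventually (x₀ := (0 : ℝ))
    (P := fun ε p => ∀ G : ℂ → ℂ, DifferentiableOn ℂ G (ball 0 4) →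
      (∀ z ∈ ball (0 : ℂ) 4, ‖G z - z ^ m‖ ≤ ε) → complexifiedRe G p.1 p.2 = 0 →
        p.1.im = 0 ∧ deriv (fun x => complexifiedRe G x p.2) p.1 ≠ 0) ?_
  · obtain ⟨r, hr, h⟩ := Metric.eventually_nhds_iff_ball.mp hloc
    refine ⟨min (r / 2) (1 / 4), by positivity, min_le_right _ _, fun G hG hε y hya hyb x hx h0 =>
      h (min (r / 2) (1 / 4)) ?_ (x, y) ⟨hx, hya.le, hyb.le⟩ G hG hε h0⟩
    rw [mem_ball_zero_iff, Real.norm_eq_abs, abs_of_pos (by positivity)]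
    exact (min_le_left _ _).trans_lt (half_lt_self hr)
  rintro ⟨x₀, y₀⟩ ⟨hx₀, hy₀a, hy₀b⟩
  simp only at hx₀ hy₀a hy₀b
  rw [mem_closedBall_zero_iff] at hx₀
  have hdiff : ∀ {ε : ℝ} {G : ℂ → ℂ}, (∀ z ∈ ball (0 : ℂ) 4, ‖G z - z ^ m‖ ≤ ε) →
      ∀ x ∈ ball (0 : ℂ) 2, ∀ y ∈ ball (0 : ℂ) 1,
        ‖complexifiedRe G x y - complexifiedRe (fun z => z ^ m) x y‖ ≤ ε := by
    intro ε G hε x hx y hy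
    rw [← complexifiedRe_sub]
    exact norm_complexifiedRe_le hε hx hy
  have hy1 : ∀ y : ℝ, 0 < y → y < 1 → (y : ℂ) ∈ ball (0 : ℂ) 1 := by
    intro y h1 h2
    rwa [mem_ball_zero_iff, Complex.norm_real, Real.norm_eq_abs, abs_of_pos h1]
  have hyev : ∀ᶠ y : ℝ in 𝓝 y₀, (y : ℂ) ∈ ball (0 : ℂ) 1 := by
    filter_upwards [Ioo_mem_nhds (ha.trans_le hy₀a) (hy₀b.trans_lt hb)] with y hy
    exact hy1 y hy.1 hy.2
  by_cases h0 : complexifiedRe (fun z => z ^ m) x₀ y₀ = 0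
  · obtain ⟨him, hd0⟩ := im_eq_zero_of_complexifiedRe_pow_eq_zero (ha.trans_le hy₀a).ne' h0
    set D : ℂ → ℂ → ℂ := fun x y =>
      (m * (x + Complex.I * y) ^ (m - 1) + m * (x - Complex.I * y) ^ (m - 1)) / 2 with hD
    set d := D x₀ y₀ with hd
    have hdpos : 0 < ‖d‖ := norm_pos_iff.mpr hd0
    have hDc : Continuous fun p : ℂ × ℝ => D p.1 p.2 := by
      simp only [hD]
      fun_prop
    have hDev : ∀ᶠ p : ℂ × ℝ in 𝓝 (x₀, y₀), ‖D p.1 p.2 - d‖ < ‖d‖ / 4 := by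
      have := Metric.tendsto_nhds.mp (hDc.tendsto (x₀, y₀)) (‖d‖ / 4) (by positivity)
      simpa only [dist_eq_norm] using this
    rw [nhds_prod_eq] at hDev
    obtain ⟨px, hpx, py, hpy, hD'⟩ := eventually_prod_iff.mp hDev
    obtain ⟨ρ, hρ, hρx⟩ := Metric.eventually_nhds_iff_ball.mp hpx
    rw [nhds_prod_eq]
    have hεev : ∀ᶠ ε in 𝓝 (0 : ℝ), ε < ‖d‖ / 16 := eventually_lt_nhds (by positivity)
    have hxev : ∀ᶠ x in 𝓝 x₀, x ∈ ball x₀ (min ρ (1 / 4)) :=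
      ball_mem_nhds _ (by positivity)
    refine (hεev.prod_mk (((hxev.prod_mk (hpy.and hyev))).filter_mono
      nhds_prod_eq.le)).mono ?_
    rintro ⟨ε, x, y⟩ ⟨hε, hx, hy, hyb⟩ G hG hGε hz
    simp only at hε hx hy hyb hGε hz ⊢
    have hsub2 : ∀ x ∈ ball x₀ (min ρ (1 / 4)), ball x (1 / 2) ⊆ ball 0 2 := by
      intro x hx
      refine ball_subset_ball' ?_
      rw [mem_ball, dist_eq_norm] at hx
      have := norm_sub_norm_le x x₀
      have := hx.trans_le (min_le_right _ _)
      rw [dist_zero_right]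
      linarith
    have hVd := differentiableOn_complexifiedRe_left hG hyb
    have hVat : ∀ x ∈ ball x₀ (min ρ (1 / 4)),
        DifferentiableAt ℂ (fun x => complexifiedRe G x y) x := fun x hx =>
      hVd.differentiableAt (isOpen_ball.mem_nhds (hsub2 x hx (mem_ball_self (by norm_num))))
    have hder : ∀ x ∈ ball x₀ (min ρ (1 / 4)),
        ‖deriv (fun x => complexifiedRe G x y) x - d‖ ≤ ‖d‖ / 2 := by
      intro x hx
      have h1 : ‖deriv (fun x => complexifiedRe G x y - complexifiedRe (fun z => z ^ m) x y) x‖ ≤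
          2 * ε / (1 / 2) := by
        refine Complex.norm_deriv_le_div_of_mapsTo_ball
          ((hVd.mono (hsub2 x hx)).sub fun w _ =>
            (hasDerivAt_complexifiedRe_pow m w y).differentiableAt.differentiableWithinAt)
          (fun w hw => ?_) (by norm_num)
        rw [mem_closedBall, dist_eq_norm]
        refine (norm_sub_le _ _).trans ?_
        linarith [hdiff hGε w (hsub2 x hx hw) y hyb,
          hdiff hGε x (hsub2 x hx (mem_ball_self (by norm_num))) y hyb]
      have h2 : deriv (fun x => complexifiedRe G x y - complexifiedRe (fun z => z ^ m) x y) x =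
          deriv (fun x => complexifiedRe G x y) x - D x y :=
        ((hVat x hx).hasDerivAt.sub (hasDerivAt_complexifiedRe_pow m x y)).deriv
      have h3 : ‖D x y - d‖ < ‖d‖ / 4 :=
        hD' (hρx x (ball_subset_ball (min_le_left _ _) hx)) hy
      rw [h2] at h1
      have h4 := norm_add_le (deriv (fun x => complexifiedRe G x y) x - D x y) (D x y - d)
      rw [sub_add_sub_cancel] at h4
      linarith
    constructor
    · have hcx : conj x ∈ ball x₀ (min ρ (1 / 4)) := by
        have : conj x₀ = x₀ := Complex.conj_eq_iff_im.mpr him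
        rw [mem_ball, dist_eq_norm] at hx ⊢
        rwa [← this, ← map_sub, Complex.norm_conj]
      have hcz : complexifiedRe G (conj x) y = 0 := by
        rw [complexifiedRe_conj, hz, map_zero]
      have hinj := (convex_ball x₀ (min ρ (1 / 4))).norm_image_sub_le_of_norm_hasDerivWithin_le
        (f := fun x => complexifiedRe G x y - d * x)
        (f' := fun x => deriv (fun x => complexifiedRe G x y) x - d) (C := ‖d‖ / 2)
        (fun w hw => ((hVat w hw).hasDerivAt.sub
          ((hasDerivAt_id w).const_mul d |>.congr_deriv (mul_one d))).hasDerivWithinAt) hder hx hcx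
      simp only [hz, hcz, zero_sub] at hinj
      rw [neg_sub_neg, ← mul_sub, norm_mul, norm_sub_rev x] at hinj
      have : ‖conj x - x‖ = 0 := by
        have := norm_nonneg (conj x - x)
        nlinarith
      exact Complex.conj_eq_iff_im.mp (sub_eq_zero.mp (norm_eq_zero.mp this))
    · intro h
      have := hder x hx
      rw [h, zero_sub, norm_neg] at this
      linarith
  · have hc : Continuous fun p : ℝ × ℂ × ℝ =>
        ‖complexifiedRe (fun z => z ^ m) p.2.1 p.2.2‖ - p.1 := by
      simp only [complexifiedRe_pow]
      fun_prop
    have hpos : 0 < ‖complexifiedRe (fun z => z ^ m) x₀ y₀‖ - 0 := by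
      rw [sub_zero]
      exact norm_pos_iff.mpr h0
    have hev := (hc.tendsto (0, x₀, y₀)).eventually_const_lt hpos
    have hx2 : ∀ᶠ x in 𝓝 x₀, x ∈ ball (0 : ℂ) 2 :=
      isOpen_ball.mem_nhds (mem_ball_zero_iff.mpr (by linarith))
    have hev2 : ∀ᶠ p : ℝ × ℂ × ℝ in 𝓝 (0, x₀, y₀), p.2.1 ∈ ball (0 : ℂ) 2 ∧
        (p.2.2 : ℂ) ∈ ball (0 : ℂ) 1 := by
      have t1 : Tendsto (fun p : ℝ × ℂ × ℝ => p.2.1) (𝓝 (0, x₀, y₀)) (𝓝 x₀) :=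
        (continuous_fst.comp continuous_snd).tendsto _
      have t2 : Tendsto (fun p : ℝ × ℂ × ℝ => p.2.2) (𝓝 (0, x₀, y₀)) (𝓝 y₀) :=
        (continuous_snd.comp continuous_snd).tendsto _
      exact (t1.eventually hx2).and (t2.eventually hyev)
    filter_upwards [hev, hev2] with p hp hp2 G hG hGε hz
    have := hdiff hGε _ hp2.1 _ hp2.2
    rw [hz, zero_sub, norm_neg] at this
    linarith

/-- Uniform local form of the gradient estimate, for real parts of holomorphic functions close
to `z ^ m`. -/
theorem exists_local_quotient_bound (m : ℕ) : ∃ ε > (0 : ℝ), ∃ δ > (0 : ℝ), ∃ C : ℝ,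
    ∀ G H : ℂ → ℂ, DifferentiableOn ℂ G (ball 0 4) → DifferentiableOn ℂ H (ball 0 4) →
      (∀ z ∈ ball (0 : ℂ) 4, ‖G z - z ^ m‖ ≤ ε) → (∀ z ∈ ball (0 : ℂ) 4, ‖H z‖ ≤ 1) →
      (∀ z ∈ ball (0 : ℂ) 4, (G z).re = 0 → (H z).re = 0) →
      ∀ z ∈ ball (0 : ℂ) δ, (G z).re ≠ 0 → |(H z).re / (G z).re| ≤ C ∧
        ‖fderiv ℝ (fun w => (H w).re / (G w).re) z‖ ≤ C := by
  have hWev : ∀ᶠ y in 𝓝 (0 : ℂ), ∀ x ∈ sphere (0 : ℂ) 1,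
      1 / 2 < ‖complexifiedRe (fun z => z ^ m) x y‖ := by
    refine (isCompact_sphere (0 : ℂ) 1).eventually_forall_of_forall_eventually fun x hx => ?_
    have hc : Continuous fun p : ℂ × ℂ => ‖complexifiedRe (fun z => z ^ m) p.2 p.1‖ := by
      simp only [complexifiedRe_pow]
      fun_prop
    refine (hc.tendsto (0, x)).eventually_const_lt ?_
    rw [mem_sphere_zero_iff_norm] at hx
    norm_num [complexifiedRe_pow, hx]
  obtain ⟨r, hr, hW⟩ := Metric.eventually_nhds_iff_ball.mp hWev
  set δ := min r 1 with hδ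
  have hδ0 : 0 < δ := lt_min hr one_pos
  have hδ1 : δ ≤ 1 := min_le_right _ _
  obtain ⟨ε, hε0, hε4, hε⟩ := exists_complexifiedRe_zeros_real_simple m (a := δ / 3)
    (b := 2 * δ / 3) (by positivity) (by linarith)
  refine ⟨ε, hε0, δ / 2, by positivity, 16 + 32 / δ, fun G H hG hH hGε hH1 hGH z hz hz0 => ?_⟩
  have hyδ : ∀ y ∈ ball (0 : ℂ) δ, y ∈ ball (0 : ℂ) 1 := fun y hy => ball_subset_ball hδ1 hy
  have hs2 : ∀ ξ ∈ sphere (0 : ℂ) 1, ξ ∈ ball (0 : ℂ) 2 := fun ξ hξ =>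
    closedBall_subset_ball (by norm_num) (sphere_subset_closedBall hξ)
  obtain ⟨Φ, hΦ1, hΦ2⟩ := exists_quotient_of_simple_zeros (δ := δ) (a := δ / 3) (b := 2 * δ / 3)
    (M := 1) (U := complexifiedRe H) (V := complexifiedRe G) (by positivity) (by linarith)
    (by linarith) (fun y hy => differentiableOn_complexifiedRe_left hH (hyδ y hy))
    (fun y hy => differentiableOn_complexifiedRe_left hG (hyδ y hy))
    (fun x hx => (differentiableOn_complexifiedRe_right hH hx).mono hyδ)
    (fun x hx => (differentiableOn_complexifiedRe_right hG hx).mono hyδ)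
    (fun x hx y hy => norm_complexifiedRe_le hH1 (hs2 x hx) (hyδ y hy))
    (fun x hx y hy => by
      have h1 := hW y (ball_subset_ball (min_le_left _ _) hy) x hx
      have h2 := norm_complexifiedRe_le hGε (hs2 x hx) (hyδ y hy)
      rw [complexifiedRe_sub, norm_sub_rev] at h2
      have h3 := norm_sub_norm_le (complexifiedRe (fun z => z ^ m) x y) (complexifiedRe G x y)
      linarith)
    (fun y hya hyb x hx h0 => by
      obtain ⟨him, hd⟩ := hε G hG hGε y hya hyb x hx h0
      refine ⟨hd, ?_⟩
      have hxr : ((x.re : ℝ) : ℂ) = x := Complex.ext (by simp) (by simp [him])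
      rw [← hxr, complexifiedRe_ofReal] at h0 ⊢
      rw [hGH _ ?_ (by exact_mod_cast h0), Complex.ofReal_zero]
      refine norm_add_I_mul_lt (by rw [hxr]; exact closedBall_subset_ball (by norm_num) hx)
        (hyδ y ?_)
      rw [mem_ball_zero_iff, Complex.norm_real, Real.norm_eq_abs, abs_of_pos (by linarith)]
      linarith)
  have hre : ∀ w : ℂ, ‖w‖ < δ / 2 → (w.re : ℂ) ∈ ball (0 : ℂ) (1 / 2) := fun w hw => by
    rw [mem_ball_zero_iff, Complex.norm_real]
    exact (Complex.abs_re_le_norm w).trans_lt (by linarith)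
  have him : ∀ w : ℂ, ‖w‖ < δ / 2 → (w.im : ℂ) ∈ ball (0 : ℂ) (δ / 2) := fun w hw => by
    rw [mem_ball_zero_iff, Complex.norm_real]
    exact (Complex.abs_im_le_norm w).trans_lt hw
  have hval : ∀ w : ℂ, ‖w‖ < δ / 2 → (G w).re ≠ 0 →
      (((H w).re / (G w).re : ℝ) : ℂ) = Φ w.re w.im := by
    intro w hw hw0
    have h1 := (hΦ1 _ (hre w hw) _ (ball_subset_ball (by linarith) (him w hw))).1
    have e : (w.re : ℂ) + Complex.I * w.im = w := by
      rw [mul_comm]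
      exact Complex.re_add_im w
    rw [complexifiedRe_ofReal, complexifiedRe_ofReal, e] at h1
    rw [Complex.ofReal_div, ← h1, mul_div_cancel_right₀ _ (by exact_mod_cast hw0)]
  rw [mem_ball_zero_iff] at hz
  have hδ32 : 0 < 32 / δ := by positivity
  constructor
  · have h1 := (hΦ1 _ (hre z hz) _ (ball_subset_ball (by linarith) (him z hz))).2
    rw [← hval z hz hz0, Complex.norm_real, Real.norm_eq_abs] at h1
    linarith
  · have hG2 : ContinuousAt (fun w => (G w).re) z :=
      Complex.continuous_re.continuousAt.comp (hG.continuousOn.continuousAt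
        (isOpen_ball.mem_nhds (mem_ball_zero_iff.mpr (by linarith))))
    refine norm_fderiv_le_of_lip' ℝ (by positivity) ?_
    have hzn : ∀ᶠ w in 𝓝 z, ‖w‖ < δ / 2 := continuous_norm.continuousAt.eventually_lt_const hz
    filter_upwards [hG2.eventually_ne hz0, hzn, ball_mem_nhds z (half_pos hδ0)] with w hw0 hw hwz
    rw [mem_ball, dist_eq_norm] at hwz
    have him' : (w.im : ℂ) ∈ ball (z.im : ℂ) (δ / 2) := by
      rw [mem_ball, dist_eq_norm, ← Complex.ofReal_sub, ← Complex.sub_im, Complex.norm_real]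
      exact (Complex.abs_im_le_norm _).trans_lt hwz
    have h1 := hΦ2 _ (hre w hw) _ (hre z hz) _ (him z hz) _ him'
    rw [← hval w hw hw0, ← hval z hz hz0, ← Complex.ofReal_sub, ← Complex.ofReal_sub,
      ← Complex.ofReal_sub, Complex.norm_real, Complex.norm_real, Complex.norm_real,
      ← Complex.sub_re, ← Complex.sub_im, mul_one, mul_one] at h1
    refine h1.trans ?_
    rw [add_mul]
    gcongr
    · exact Complex.abs_re_le_norm _
    · exact Complex.abs_im_le_norm _

theorem exists_norm_eq_one_mul_pow_eq {c : ℂ} (hc : c ≠ 0) {n : ℕ} (hn : n = 0 → c.im = 0) :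
    ∃ e : ℂ, ‖e‖ = 1 ∧ ∃ q : ℝ, q ≠ 0 ∧ c * e ^ n = q := by
  rcases Nat.eq_zero_or_pos n with rfl | hpos
  · have h : (c.re : ℂ) = c := Complex.ext (by simp) (by simp [hn rfl])
    refine ⟨1, norm_one, c.re, fun h0 => hc ?_, by simp [h]⟩
    rw [← h, h0, Complex.ofReal_zero]
  · have hc' : (‖c‖ : ℂ) ≠ 0 := by exact_mod_cast norm_ne_zero_iff.mpr hc
    obtain ⟨e, he⟩ := IsAlgClosed.exists_pow_nat_eq ((‖c‖ : ℂ) / c) hpos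
    refine ⟨e, ?_, ‖c‖, norm_ne_zero_iff.mpr hc, by rw [he, mul_div_cancel₀ _ hc]⟩
    have := congrArg norm he
    rw [norm_pow, norm_div, Complex.norm_real, norm_norm,
      div_self (norm_ne_zero_iff.mpr hc)] at this
    exact (pow_eq_one_iff_of_nonneg (norm_nonneg e) hpos.ne').mp this

theorem differentiableAt_re_div_re {F G : ℂ → ℂ} {z : ℂ} (hF : DifferentiableAt ℂ F z)
    (hG : DifferentiableAt ℂ G z) (h : (G z).re ≠ 0) :
    DifferentiableAt ℝ (fun w => (F w).re / (G w).re) z := by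
  have h1 : DifferentiableAt ℝ (fun w => (F w).re) z :=
    Complex.reCLM.differentiableAt.comp z (hF.restrictScalars ℝ)
  have h2 : DifferentiableAt ℝ (fun w => (G w).re) z :=
    Complex.reCLM.differentiableAt.comp z (hG.restrictScalars ℝ)
  simp only [div_eq_mul_inv]
  exact h1.mul (h2.fun_inv h)

/-- The quotient estimate near a point, uniformly along a convergent sequence of pairs. -/
theorem eventually_local_quotient_bound {ι : Type*} {l : Filter ι} {F G : ι → ℂ → ℂ} {F₀ G₀ : ℂ → ℂ}
    (hF : ∀ k, DifferentiableOn ℂ (F k) (ball 0 1)) (hG : ∀ k, DifferentiableOn ℂ (G k) (ball 0 1))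
    (hF₀ : DifferentiableOn ℂ F₀ (ball 0 1)) (hG₀ : DifferentiableOn ℂ G₀ (ball 0 1))
    (hFl : ∀ R : ℝ, 0 < R → R < 1 → TendstoUniformlyOn F F₀ l (closedBall 0 R))
    (hGl : ∀ R : ℝ, 0 < R → R < 1 → TendstoUniformlyOn G G₀ l (closedBall 0 R))
    (hne : ∃ z ∈ ball (0 : ℂ) 1, (G₀ z).re ≠ 0)
    (hFG : ∀ k, ∀ z ∈ ball (0 : ℂ) 1, (G k z).re = 0 → (F k z).re = 0)
    {x : ℂ} (hx : x ∈ ball (0 : ℂ) 1) :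
    ∃ ρ > 0, ∃ C : ℝ, ∀ᶠ k in l, ∀ z ∈ ball x ρ, (G k z).re ≠ 0 →
      |(F k z).re / (G k z).re| ≤ C ∧
        ‖fderiv ℝ (fun w => (F k w).re / (G k w).re) z‖ ≤ C := by
  have hx1 : ‖x‖ < 1 := mem_ball_zero_iff.mp hx
  set β : ℂ := (G₀ x).im * Complex.I with hβ
  have hβre : β.re = 0 := by simp [hβ]
  have han : AnalyticOnNhd ℂ (fun z => G₀ z - β) (ball 0 1) :=
    (hG₀.sub_const β).analyticOnNhd isOpen_ball
  have hnz : ¬ ∀ᶠ z in 𝓝 x, G₀ z - β = 0 := by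
    intro h
    obtain ⟨z, hz, hz0⟩ := hne
    have := han.eqOn_zero_of_preconnected_of_eventuallyEq_zero
      (convex_ball (0 : ℂ) 1).isPreconnected hx h hz
    have h2 := congrArg Complex.re (sub_eq_zero.mp this)
    exact hz0 (h2.trans hβre)
  obtain ⟨n, h, hh, hhx, hev⟩ := (han x hx).exists_eventuallyEq_pow_smul_nonzero_iff.mpr hnz
  obtain ⟨e, he, q, hq, hceq⟩ := exists_norm_eq_one_mul_pow_eq hhx (n := n) fun hn => by
    have := hev.self_of_nhds
    rw [hn, pow_zero, one_smul] at this
    rw [← this]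
    simp [hβ]
  have hqC : (q : ℂ) ≠ 0 := by exact_mod_cast hq
  obtain ⟨ε, hε, δ, hδ, C, hC⟩ := exists_local_quotient_bound n
  have hclose : ∀ᶠ z in 𝓝 x, ‖h z / h x - 1‖ < ε / (2 * 4 ^ n) := by
    have hc : ContinuousAt (fun z => h z / h x - 1) x :=
      (hh.continuousAt.div_const _).sub continuousAt_const
    refine Tendsto.eventually_lt_const ?_ hc.norm.tendsto
    rw [div_self hhx, sub_self, norm_zero]
    positivity
  obtain ⟨η, hη, hηball⟩ := Metric.eventually_nhds_iff_ball.mp (hev.and hclose)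
  set s : ℝ := min (η / 4) ((1 - ‖x‖) / 8) with hs
  have hs0 : 0 < s := lt_min (by positivity) (by linarith)
  have hsη : 4 * s ≤ η := by
    have : s ≤ η / 4 := min_le_left _ _
    linarith
  set R : ℝ := (1 + ‖x‖) / 2 with hR
  have hR0 : 0 < R := by positivity
  have hR1 : R < 1 := by rw [hR]; linarith
  set σ : ℂ := s * e with hσ
  have hσn : ‖σ‖ = s := by
    rw [hσ, norm_mul, he, mul_one, Complex.norm_real, Real.norm_eq_abs, abs_of_pos hs0]
  have hσ0 : σ ≠ 0 := norm_ne_zero_iff.mp (by rw [hσn]; exact hs0.ne')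
  have hmemη : ∀ w ∈ ball (0 : ℂ) 4, x + σ * w ∈ ball x η := by
    intro w hw
    rw [mem_ball_zero_iff] at hw
    rw [mem_ball_iff_norm, add_sub_cancel_left, norm_mul, hσn]
    nlinarith
  have hmemR : ∀ w ∈ ball (0 : ℂ) 4, x + σ * w ∈ closedBall (0 : ℂ) R := by
    intro w hw
    rw [mem_ball_zero_iff] at hw
    rw [mem_closedBall_zero_iff]
    refine (norm_add_le _ _).trans ?_
    rw [norm_mul, hσn]
    have : s ≤ (1 - ‖x‖) / 8 := min_le_right _ _
    have : s * ‖w‖ ≤ s * 4 := by gcongr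
    rw [hR]
    linarith
  have hR1sub : closedBall (0 : ℂ) R ⊆ ball 0 1 := closedBall_subset_ball hR1
  obtain ⟨A, hA⟩ := (isCompact_closedBall (0 : ℂ) R).exists_bound_of_continuousOn
    (hF₀.continuousOn.mono hR1sub)
  have hA0 : 0 ≤ A := (norm_nonneg _).trans (hA 0 (mem_closedBall_self hR0.le))
  set κ : ℝ := q * s ^ n with hκ
  have hκ0 : κ ≠ 0 := mul_ne_zero hq (pow_ne_zero _ hs0.ne')
  have hκC : (κ : ℂ) ≠ 0 := by exact_mod_cast hκ0
  refine ⟨s * min δ 4, by positivity, max (|(A + 1) / κ| * C) (|(A + 1) / κ| * (C / s)), ?_⟩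
  filter_upwards [Metric.tendstoUniformlyOn_iff.mp (hFl R hR0 hR1) 1 one_pos,
    Metric.tendstoUniformlyOn_iff.mp (hGl R hR0 hR1) (|κ| * (ε / 2)) (by positivity)]
    with k hFk hGk z hz hz0
  set Gs : ℂ → ℂ := fun w => (G k (x + σ * w) - β) / κ with hGs
  set Hs : ℂ → ℂ := fun w => F k (x + σ * w) / (A + 1 : ℝ) with hHs
  have hA1 : (A + 1 : ℝ) ≠ 0 := by positivity
  have hGre : ∀ w, (Gs w).re = (G k (x + σ * w)).re / κ := fun w => by
    simp only [hGs]
    rw [Complex.div_ofReal_re, Complex.sub_re, hβre, sub_zero]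
  have hHre : ∀ w, (Hs w).re = (F k (x + σ * w)).re / (A + 1) := fun w => by
    simp only [hHs]
    rw [Complex.div_ofReal_re]
  have hGd : DifferentiableOn ℂ Gs (ball 0 4) :=
    (((hG k).comp (f := fun w => x + σ * w) (by fun_prop)
      fun w hw => hR1sub (hmemR w hw)).sub_const β).div_const _
  have hHd : DifferentiableOn ℂ Hs (ball 0 4) :=
    ((hF k).comp (f := fun w => x + σ * w) (by fun_prop)
      fun w hw => hR1sub (hmemR w hw)).div_const _
  have hGε : ∀ w ∈ ball (0 : ℂ) 4, ‖Gs w - w ^ n‖ ≤ ε := by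
    intro w hw
    obtain ⟨h1, h2⟩ := hηball _ (hmemη w hw)
    have h3 := hGk _ (hmemR w hw)
    rw [dist_eq_norm, norm_sub_rev] at h3
    rw [mem_ball_zero_iff] at hw
    have e1 : Gs w - w ^ n = (G k (x + σ * w) - G₀ (x + σ * w)) / κ +
        w ^ n * (h (x + σ * w) / h x - 1) := by
      have e2 : (G₀ (x + σ * w) - β) / κ = w ^ n * (h (x + σ * w) / h x) := by
        rw [h1, add_sub_cancel_left, smul_eq_mul, div_eq_iff hκC, hκ, hσ]
        push_cast
        rw [← hceq, mul_pow, mul_pow]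
        field_simp
      simp only [hGs]
      rw [mul_sub, ← e2]
      ring
    rw [e1]
    refine (norm_add_le _ _).trans ?_
    have h4 : ‖(G k (x + σ * w) - G₀ (x + σ * w)) / κ‖ ≤ ε / 2 := by
      rw [norm_div, Complex.norm_real, Real.norm_eq_abs, div_le_iff₀ (abs_pos.mpr hκ0)]
      linarith
    have h5 : ‖w ^ n * (h (x + σ * w) / h x - 1)‖ ≤ ε / 2 := by
      rw [norm_mul, norm_pow]
      calc ‖w‖ ^ n * ‖h (x + σ * w) / h x - 1‖ ≤ 4 ^ n * (ε / (2 * 4 ^ n)) := by gcongr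
        _ = ε / 2 := by field_simp
    linarith
  have hH1 : ∀ w ∈ ball (0 : ℂ) 4, ‖Hs w‖ ≤ 1 := by
    intro w hw
    have h1 := hFk _ (hmemR w hw)
    have h2 := hA _ (hmemR w hw)
    rw [dist_eq_norm, norm_sub_rev] at h1
    have h3 := norm_sub_norm_le (F k (x + σ * w)) (F₀ (x + σ * w))
    simp only [hHs]
    rw [norm_div, Complex.norm_real, Real.norm_eq_abs, abs_of_pos (by positivity),
      div_le_one (by positivity)]
    linarith
  have hGH : ∀ w ∈ ball (0 : ℂ) 4, (Gs w).re = 0 → (Hs w).re = 0 := by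
    intro w hw hw0
    rw [hGre, div_eq_zero_iff, or_iff_left hκ0] at hw0
    rw [hHre, hFG k _ (hR1sub (hmemR w hw)) hw0, zero_div]
  set L : ℂ → ℂ := fun z => (z - x) / σ with hL
  have hLinv : ∀ z, x + σ * L z = z := fun z => by
    simp only [hL]
    field_simp
    ring
  have hLz' : L z ∈ ball (0 : ℂ) (min δ 4) := by
    rw [mem_ball_iff_norm] at hz
    rw [mem_ball_zero_iff, hL, norm_div, hσn, div_lt_iff₀ hs0]
    linarith
  have hLz : L z ∈ ball (0 : ℂ) δ := ball_subset_ball (min_le_left _ _) hLz'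
  have hL4 : ball (0 : ℂ) 4 ∈ 𝓝 (L z) :=
    isOpen_ball.mem_nhds (ball_subset_ball (min_le_right _ _) hLz')
  have hGz : (Gs (L z)).re ≠ 0 := by
    rw [hGre, hLinv]
    exact div_ne_zero hz0 hκ0
  have hfun : (fun w => (F k w).re / (G k w).re) =
      fun w => ((A + 1) / κ) * ((fun v => (Hs v).re / (Gs v).re) ∘ L) w := by
    funext w
    simp only [Function.comp, hGre, hHre, hLinv]
    by_cases h0 : (G k w).re = 0
    · simp [h0]
    · field_simp
  obtain ⟨b1, b2⟩ := hC Gs Hs hGd hHd hGε hH1 hGH (L z) hLz hGz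
  constructor
  · have := congrFun hfun z
    simp only [Function.comp] at this
    rw [this, abs_mul]
    exact le_max_of_le_left (by gcongr)
  · refine le_max_of_le_right ?_
    have hf := differentiableAt_re_div_re (hHd.differentiableAt hL4) (hGd.differentiableAt hL4) hGz
    have hLd : DifferentiableAt ℝ L z := by
      simp only [hL]
      fun_prop
    have hLn : ‖fderiv ℝ L z‖ ≤ s⁻¹ := by
      refine norm_fderiv_le_of_lip' ℝ (by positivity) (Eventually.of_forall fun w => ?_)
      simp only [hL]
      rw [← sub_div, sub_sub_sub_cancel_right, norm_div, hσn, div_eq_inv_mul]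
    rw [hfun, fderiv_const_mul (hf.comp z hLd), fderiv_comp z hf hLd, norm_smul, Real.norm_eq_abs,
      div_eq_mul_inv C]
    refine mul_le_mul_of_nonneg_left ((ContinuousLinearMap.opNorm_comp_le _ _).trans ?_)
      (abs_nonneg _)
    exact mul_le_mul b2 hLn (norm_nonneg _) ((norm_nonneg _).trans b2)

/-- Normalization of a holomorphic function relative to its real part. -/
def IsNormalized (p : ℕ) (F : ℂ → ℂ) : Prop :=
  DifferentiableOn ℂ F (ball 0 1) ∧ HasFewImaginaryValues p F ∧ (F 0).im = 0 ∧
    (∀ z ∈ closedBall (0 : ℂ) (1 / 2), |(F z).re| ≤ 1) ∧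
    ∃ z ∈ closedBall (0 : ℂ) (1 / 2), |(F z).re| = 1

theorem exists_isNormalized {p : ℕ} {F : ℂ → ℂ} (hF : DifferentiableOn ℂ F (ball 0 1))
    (hp : HasFewImaginaryValues p F) (hne : ∃ z ∈ ball (0 : ℂ) 1, (F z).re ≠ 0) :
    ∃ c > (0 : ℝ), ∃ F' : ℂ → ℂ, IsNormalized p F' ∧ ∀ z, (F' z).re = c * (F z).re := by
  have hsub : closedBall (0 : ℂ) (1 / 2) ⊆ ball 0 1 := closedBall_subset_ball (by norm_num)
  obtain ⟨z₀, hz₀, hmax⟩ := (isCompact_closedBall (0 : ℂ) (1 / 2)).exists_isMaxOn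
    ⟨0, by simp⟩ (f := fun z => |(F z).re|)
    (Complex.continuous_re.comp_continuousOn (hF.continuousOn.mono hsub)).abs
  have hpos : 0 < |(F z₀).re| := by
    by_contra hn
    have h0 : ∀ z ∈ closedBall (0 : ℂ) (1 / 2), (F z).re = 0 := fun z hz =>
      abs_nonpos_iff.mp ((hmax hz).trans (not_lt.mp hn))
    obtain ⟨z, hz, hz0⟩ := hne
    have han : AnalyticOnNhd ℂ F (ball 0 1) := hF.analyticOnNhd isOpen_ball
    have hconst : ∃ w, EqOn F (fun _ => w) (ball (0 : ℂ) (1 / 2)) := by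
      obtain ⟨w, hw⟩ | hopen := (han.mono (ball_subset_closedBall.trans hsub)).is_constant_or_isOpen
        (convex_ball (0 : ℂ) (1 / 2)).isPreconnected
      · exact ⟨w, hw⟩
      · exfalso
        have ho := hopen _ subset_rfl isOpen_ball
        have hmem : F 0 ∈ F '' ball (0 : ℂ) (1 / 2) := ⟨0, by simp, rfl⟩
        obtain ⟨r, hr, hrs⟩ := Metric.isOpen_iff.mp ho _ hmem
        obtain ⟨y, hy, hy'⟩ := hrs (show F 0 + (r / 2 : ℝ) ∈ ball (F 0) r by
          rw [mem_ball_iff_norm, add_sub_cancel_left, Complex.norm_real, Real.norm_eq_abs,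
            abs_of_pos (half_pos hr)]
          exact half_lt_self hr)
        have h1 := congrArg Complex.re hy'
        rw [Complex.add_re, h0 y (ball_subset_closedBall hy), h0 0 (by simp),
          Complex.ofReal_re] at h1
        linarith
    obtain ⟨w, hw⟩ := hconst
    have hev : F =ᶠ[𝓝 0] fun _ => w := by
      filter_upwards [ball_mem_nhds (0 : ℂ) (half_pos one_pos)] with y hy using hw hy
    have := han.eqOn_of_preconnected_of_eventuallyEq analyticOnNhd_const
      (convex_ball (0 : ℂ) 1).isPreconnected (mem_ball_self one_pos) hev
    have h1 := this hz
    have h2 := this (mem_ball_self one_pos)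
    rw [h1, ← h2] at hz0
    exact hz0 (h0 0 (by simp))
  set c : ℝ := |(F z₀).re|⁻¹ with hc
  have hc0 : 0 < c := inv_pos.mpr hpos
  refine ⟨c, hc0, fun z => c * F z + (-(c * (F 0).im) : ℝ) * Complex.I,
    ⟨(hF.const_mul _).add_const _, hp.mul_add hc0.ne' _, by simp, fun z hz => ?_, z₀, hz₀, ?_⟩,
    fun z => by simp⟩
  · have e : ((c : ℂ) * F z + (-(c * (F 0).im) : ℝ) * Complex.I).re = c * (F z).re := by simp
    rw [e, abs_mul, abs_of_pos hc0, hc, inv_mul_le_iff₀ hpos, mul_one]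
    exact hmax hz
  · have e : ((c : ℂ) * F z₀ + (-(c * (F 0).im) : ℝ) * Complex.I).re = c * (F z₀).re := by simp
    rw [e, abs_mul, abs_of_pos hc0, hc, inv_mul_cancel₀ hpos.ne']

theorem exists_re_ne_zero_of_tendsto {p : ℕ} {F : ℕ → ℂ → ℂ} {F₀ : ℂ → ℂ} {l : Filter ℕ} [l.NeBot]
    (hF : ∀ k, IsNormalized p (F k))
    (hFl : TendstoUniformlyOn F F₀ l (closedBall 0 (1 / 2))) :
    ∃ z ∈ ball (0 : ℂ) 1, (F₀ z).re ≠ 0 := by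
  by_contra! hn
  obtain ⟨k, hk⟩ := (Metric.tendstoUniformlyOn_iff.mp hFl (1 / 2) (by norm_num)).exists
  obtain ⟨z, hz, h1⟩ := (hF k).2.2.2.2
  have h2 := hk z hz
  rw [dist_eq_norm] at h2
  have h3 := (Complex.abs_re_le_norm _).trans_lt h2
  rw [Complex.sub_re, hn z (closedBall_subset_ball (by norm_num) hz), zero_sub, abs_neg, h1] at h3
  norm_num at h3

theorem exists_gradient_bound_of_isNormalized (p : ℕ) {K : Set ℂ} (hK : IsCompact K)
    (hKD : K ⊆ ball 0 1) : ∃ C > (0 : ℝ), ∀ F G : ℂ → ℂ, IsNormalized p F → IsNormalized p G →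
      (∀ z ∈ ball (0 : ℂ) 1, (F z).re = 0 ↔ (G z).re = 0) →
      ∀ x ∈ K, (G x).re ≠ 0 → ∀ y ∈ K, (G y).re ≠ 0 →
        ‖fderiv ℝ (fun w => (F w).re / (G w).re) x‖ ≤ C * |(F y).re / (G y).re| := by
  by_contra! hcon
  choose F G hF hG hFG x hx hx0 y hy hy0 hbad using
    fun k : ℕ => hcon (k + 1) (by positivity)
  set 𝒰 : Ultrafilter ℕ := hyperfilter ℕ
  have hbd : ∀ {E : ℕ → ℂ → ℂ}, (∀ k, IsNormalized p (E k)) → ∀ R : ℝ, 0 < R → R < 1 →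
      ∃ A : ℝ, ∀ k, ∀ z ∈ closedBall (0 : ℂ) R, ‖E k z‖ ≤ A := by
    intro E hE R hR0 hR1
    obtain ⟨A, hA⟩ := exists_bound_of_re_bound p hR0 hR1
    exact ⟨A, fun k => hA (E k) (hE k).1 (hE k).2.1 (hE k).2.2.1 (hE k).2.2.2.1⟩
  obtain ⟨F₀, hF₀, hFl⟩ := exists_limit_of_locally_bounded 𝒰 (fun k => (hF k).1) (hbd hF)
  obtain ⟨G₀, hG₀, hGl⟩ := exists_limit_of_locally_bounded 𝒰 (fun k => (hG k).1) (hbd hG)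
  have hFne := exists_re_ne_zero_of_tendsto hF (hFl (1 / 2) (by norm_num) (by norm_num))
  have hGne := exists_re_ne_zero_of_tendsto hG (hGl (1 / 2) (by norm_num) (by norm_num))
  have hlim : ∀ {t : ℕ → ℂ}, (∀ k, t k ∈ K) → ∃ s ∈ K, Tendsto t 𝒰 (𝓝 s) := fun {t} ht =>
    hK.ultrafilter_le_nhds (𝒰.map t) (by
      rw [Ultrafilter.coe_map, le_principal_iff, mem_map]
      exact univ_mem' ht)
  obtain ⟨x', hx', hxlim⟩ := hlim hx
  obtain ⟨y', hy', hylim⟩ := hlim hy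
  obtain ⟨ρ₁, hρ₁, C₁, h₁⟩ := eventually_local_quotient_bound (fun k => (hF k).1)
    (fun k => (hG k).1) hF₀ hG₀ hFl hGl hGne (fun k z hz => (hFG k z hz).mpr) (hKD hx')
  obtain ⟨ρ₂, hρ₂, C₂, h₂⟩ := eventually_local_quotient_bound (fun k => (hG k).1)
    (fun k => (hF k).1) hG₀ hF₀ hGl hFl hFne (fun k z hz => (hFG k z hz).mp) (hKD hy')
  obtain ⟨n, hn⟩ := exists_nat_gt (C₁ * C₂)
  have hlarge : ∀ᶠ k in (𝒰 : Filter ℕ), n ≤ k :=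
    Nat.hyperfilter_le_atTop (eventually_ge_atTop n)
  obtain ⟨k, hk1, hk2, hkx, hky, hkn⟩ := (h₁.and (h₂.and ((hxlim.eventually
    (ball_mem_nhds x' hρ₁)).and ((hylim.eventually (ball_mem_nhds y' hρ₂)).and hlarge)))).exists
  have hFy0 : (F k (y k)).re ≠ 0 := fun h => hy0 k ((hFG k _ (hKD (hy k))).mp h)
  have b1 := (hk1 _ hkx (hx0 k)).2
  have b2 := (hk2 _ hky hFy0).1
  have b3 := hbad k
  set q := |(F k (y k)).re / (G k (y k)).re| with hq
  have hq0 : 0 < q := abs_pos.mpr (div_ne_zero hFy0 (hy0 k))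
  have e : |(G k (y k)).re / (F k (y k)).re| = q⁻¹ := by rw [hq, ← abs_inv, inv_div]
  rw [e, inv_le_iff_one_le_mul₀ hq0] at b2
  have hC₁ : 0 ≤ C₁ := (norm_nonneg _).trans b1
  have hkn' : (n : ℝ) ≤ k := by exact_mod_cast hkn
  have hC₂ : 0 ≤ C₂ := by
    by_contra hneg
    nlinarith
  have h5 : (k + 1) * q < C₁ := b3.trans_le b1
  have h6 : C₁ ≤ C₁ * (C₂ * q) := le_mul_of_one_le_right hC₁ b2
  have h7 : (k + 1 : ℝ) < C₁ * C₂ := by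
    by_contra! h
    nlinarith
  linarith

/-- The gradient estimate for ratios of real parts of holomorphic functions. -/
theorem exists_gradient_bound (p : ℕ) {K : Set ℂ} (hK : IsCompact K)
    (hKD : K ⊆ ball 0 1) : ∃ C > (0 : ℝ), ∀ F G : ℂ → ℂ,
      DifferentiableOn ℂ F (ball 0 1) → DifferentiableOn ℂ G (ball 0 1) →
      HasFewImaginaryValues p F → HasFewImaginaryValues p G →
      (∃ z ∈ ball (0 : ℂ) 1, (F z).re ≠ 0) → (∃ z ∈ ball (0 : ℂ) 1, (G z).re ≠ 0) →
      (∀ z ∈ ball (0 : ℂ) 1, (F z).re = 0 ↔ (G z).re = 0) →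
      ∀ x ∈ K, (G x).re ≠ 0 → ∀ y ∈ K, (G y).re ≠ 0 →
        ‖fderiv ℝ (fun w => (F w).re / (G w).re) x‖ ≤ C * |(F y).re / (G y).re| := by
  obtain ⟨C, hC0, hC⟩ := exists_gradient_bound_of_isNormalized p hK hKD
  refine ⟨C, hC0, fun F G hF hG hFp hGp hFne hGne hFG x hx hx0 y hy hy0 => ?_⟩
  obtain ⟨c, hc, F', hF', hcF⟩ := exists_isNormalized hF hFp hFne
  obtain ⟨d, hd, G', hG', hdG⟩ := exists_isNormalized hG hGp hGne
  have hnz : ∀ z, (G z).re ≠ 0 → (G' z).re ≠ 0 := fun z hz => by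
    rw [hdG]
    exact mul_ne_zero hd.ne' hz
  have key := hC F' G' hF' hG' (fun z hz => by
    rw [hcF, hdG, mul_eq_zero_iff_left hc.ne', mul_eq_zero_iff_left hd.ne', hFG z hz])
    x hx (hnz x hx0) y hy (hnz y hy0)
  have hfun : (fun w => (F w).re / (G w).re) =
      fun w => (d / c) * ((F' w).re / (G' w).re) := by
    funext w
    rw [hcF, hdG]
    field_simp
  have hxD : ball (0 : ℂ) 1 ∈ 𝓝 x := isOpen_ball.mem_nhds (hKD hx)
  have hdiff := differentiableAt_re_div_re (hF'.1.differentiableAt hxD)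
    (hG'.1.differentiableAt hxD) (hnz x hx0)
  have hfy := congrFun hfun y
  rw [hfy, hfun, fderiv_const_mul hdiff, norm_smul, Real.norm_eq_abs, abs_mul]
  calc |d / c| * _ ≤ |d / c| * _ := mul_le_mul_of_nonneg_left key (abs_nonneg _)
    _ = _ := by ring

/-- The coordinate isometry between the complex plane and `ℝ²`. -/
def complexIsometryEn : ℂ ≃ₗᵢ[ℝ] En 2 := Complex.orthonormalBasisOneI.repr

theorem complexIsometryEn_mem_ball {z : ℂ} :
    complexIsometryEn z ∈ ball (0 : En 2) 1 ↔ z ∈ ball (0 : ℂ) 1 := by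
  simp

theorem laplacian_comp_complexIsometryEn (u : En 2 → ℝ) (z : ℂ) :
    Laplacian.laplacian (u ∘ complexIsometryEn) z = laplacianAt u (complexIsometryEn z) := by
  rw [InnerProductSpace.laplacian_eq_iteratedFDeriv_orthonormalBasis _
    Complex.orthonormalBasisOneI]
  refine Finset.sum_congr rfl fun i _ => ?_
  have h := complexIsometryEn.toContinuousLinearEquiv.iteratedFDerivWithin_comp_right u
    uniqueDiffOn_univ (mem_univ (complexIsometryEn z)) 2
  simp only [preimage_univ, iteratedFDerivWithin_univ] at h
  change iteratedFDeriv ℝ 2 (u ∘ complexIsometryEn.toContinuousLinearEquiv) z _ = _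
  rw [h, ContinuousMultilinearMap.compContinuousLinearMap_apply]
  congr 1
  funext j
  have hi : complexIsometryEn (Complex.orthonormalBasisOneI i) = EuclideanSpace.single i 1 :=
    Complex.orthonormalBasisOneI.repr_self i
  fin_cases j <;> exact hi

/-- A harmonic function on the unit disc of `ℝ²` is the real part of a holomorphic function. -/
theorem HarmonicOnSet.exists_analyticOnNhd_re_eq {u : En 2 → ℝ}
    (hu : HarmonicOnSet u (ball 0 1)) : ∃ F : ℂ → ℂ, AnalyticOnNhd ℂ F (ball 0 1) ∧
      ∀ z ∈ ball (0 : ℂ) 1, (F z).re = u (complexIsometryEn z) := by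
  refine InnerProductSpace.HarmonicOnNhd.exists_analyticOnNhd_ball_re_eq
    (f := u ∘ complexIsometryEn) fun z hz => ⟨?_, ?_⟩
  · exact (hu.1.contDiffAt (isOpen_ball.mem_nhds (complexIsometryEn_mem_ball.2 hz))).comp z
      complexIsometryEn.contDiff.contDiffAt
  · filter_upwards [isOpen_ball.mem_nhds hz] with w hw
    rw [laplacian_comp_complexIsometryEn]
    exact hu.2 _ (complexIsometryEn_mem_ball.2 hw)

theorem encard_components_le_nodalComponents {u : En 2 → ℝ} {F : ℂ → ℂ}
    (hFu : ∀ z ∈ ball (0 : ℂ) 1, (F z).re = u (complexIsometryEn z)) :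
    {C | ∃ x ∈ ball (0 : ℂ) 1 \ {w | (F w).re = 0},
      C = connectedComponentIn (ball (0 : ℂ) 1 \ {w | (F w).re = 0}) x}.encard ≤
      (nodalComponents u (ball 0 1)).encard := by
  have himage : complexIsometryEn '' (ball (0 : ℂ) 1 \ {w | (F w).re = 0}) =
      ball 0 1 \ zeroSet u (ball 0 1) := by
    ext x
    obtain ⟨z, rfl⟩ := complexIsometryEn.surjective x
    rw [complexIsometryEn.injective.mem_set_image, Set.mem_sdiff, Set.mem_sdiff,
      complexIsometryEn_mem_ball]
    refine and_congr_right fun hz => ?_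
    change ¬ (F z).re = 0 ↔ ¬ (_ ∧ _)
    rw [complexIsometryEn_mem_ball, hFu z hz]
    tauto
  refine encard_le_encard_of_injOn (f := fun C => complexIsometryEn '' C) ?_
    complexIsometryEn.injective.image_injective.injOn
  rintro C ⟨z, hz, rfl⟩
  refine ⟨complexIsometryEn z, himage ▸ mem_image_of_mem _ hz, ?_⟩
  rw [← himage]
  exact complexIsometryEn.toHomeomorph.image_connectedComponentIn hz

theorem norm_gradient_eq_norm_fderiv_comp (f : En 2 → ℝ) (z : ℂ) :
    ‖gradient f (complexIsometryEn z)‖ = ‖fderiv ℝ (f ∘ complexIsometryEn) z‖ := by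
  rw [gradient, LinearIsometryEquiv.norm_map, ← norm_iteratedFDeriv_one (𝕜 := ℝ),
    ← norm_iteratedFDeriv_one (𝕜 := ℝ), LinearIsometryEquiv.norm_iteratedFDeriv_comp_right]

theorem stmt1 (N : ℕ) (K : Set (En 2)) (hK : IsCompact K) (hKD : K ⊆ ball (0 : En 2) 1) :
    ∃ C₂ > (0 : ℝ), ∀ u v : En 2 → ℝ,
      HarmonicOnSet u (ball 0 1) → HarmonicOnSet v (ball 0 1) →
      (∃ x ∈ ball (0 : En 2) 1, u x ≠ 0) → (∃ x ∈ ball (0 : En 2) 1, v x ≠ 0) →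
      zeroSet u (ball 0 1) = zeroSet v (ball 0 1) →
      (nodalComponents u (ball 0 1)).Finite →
      (nodalComponents u (ball 0 1)).ncard < N →
      ∀ x ∈ K \ zeroSet u (ball 0 1), ∀ y ∈ K \ zeroSet u (ball 0 1),
        ‖gradient (fun z => u z / v z) x‖ ≤ C₂ * |u y / v y| := by
  obtain ⟨C, hC0, hC⟩ := exists_gradient_bound (N * N) (K := complexIsometryEn ⁻¹' K)
    (complexIsometryEn.toHomeomorph.isCompact_preimage.2 hK)
    fun z hz => complexIsometryEn_mem_ball.1 (hKD hz)
  refine ⟨C, hC0, fun u v hu hv hune hvne huv hfin hcard x hx y hy => ?_⟩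
  obtain ⟨F, hF, hFu⟩ := hu.exists_analyticOnNhd_re_eq
  obtain ⟨G, hG, hGv⟩ := hv.exists_analyticOnNhd_re_eq
  have hne {w : En 2 → ℝ} {H : ℂ → ℂ}
      (hHw : ∀ z ∈ ball (0 : ℂ) 1, (H z).re = w (complexIsometryEn z))
      (hw : ∃ x ∈ ball (0 : En 2) 1, w x ≠ 0) : ∃ z ∈ ball (0 : ℂ) 1, (H z).re ≠ 0 := by
    obtain ⟨x, hx, hx0⟩ := hw
    obtain ⟨z, rfl⟩ := complexIsometryEn.surjective x
    rw [complexIsometryEn_mem_ball] at hx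
    exact ⟨z, hx, by rwa [hHw z hx]⟩
  have hcomp : (nodalComponents u (ball 0 1)).encard ≤ N := by
    rw [← hfin.cast_ncard_eq]
    exact_mod_cast hcard.le
  have hnodal : nodalComponents u (ball 0 1) = nodalComponents v (ball 0 1) := by
    rw [nodalComponents, nodalComponents, huv]
  have hzero : ∀ w ∈ ball (0 : En 2) 1, u w = 0 ↔ v w = 0 := fun w hw => by
    simpa [zeroSet, mem_ball_zero_iff.1 hw] using Set.ext_iff.1 huv w
  have hGne : ∀ z : ℂ, complexIsometryEn z ∈ K \ zeroSet u (ball 0 1) → (G z).re ≠ 0 :=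
    fun z hz h0 => by
      have hzb := hKD hz.1
      rw [hGv z (complexIsometryEn_mem_ball.1 hzb), ← hzero _ hzb] at h0
      exact hz.2 ⟨hzb, h0⟩
  obtain ⟨x, rfl⟩ := complexIsometryEn.surjective x
  obtain ⟨y, rfl⟩ := complexIsometryEn.surjective y
  have hxb := complexIsometryEn_mem_ball.1 (hKD hx.1)
  have hyb := complexIsometryEn_mem_ball.1 (hKD hy.1)
  have key := hC F G hF.differentiableOn hG.differentiableOn
    (hasFewImaginaryValues_of_components hF (hne hFu hune)
      ((encard_components_le_nodalComponents hFu).trans hcomp))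
    (hasFewImaginaryValues_of_components hG (hne hGv hvne)
      ((encard_components_le_nodalComponents hGv).trans (hnodal ▸ hcomp)))
    (hne hFu hune) (hne hGv hvne)
    (fun z hz => by
      rw [hFu z hz, hGv z hz, hzero _ (complexIsometryEn_mem_ball.2 hz)])
    x hx.1 (hGne x hx) y hy.1 (hGne y hy)
  have heq : (fun z => u z / v z) ∘ complexIsometryEn =ᶠ[𝓝 x]
      fun z => (F z).re / (G z).re := by
    filter_upwards [isOpen_ball.mem_nhds hxb] with z hz
    rw [hFu z hz, hGv z hz, Function.comp_apply]
  rwa [norm_gradient_eq_norm_fderiv_comp, heq.fderiv_eq, ← hFu y hyb, ← hGv y hyb]
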